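/- arXiv:1310.7767 — 2 statements merged into one kernel-verified Lean document; each statement's English description precedes it below -/
import Mathlib

section
/- Let λ ∈ ℂ be an eigenvalue of the imaginary cubic oscillator. Then λ is real and positive, i.e. Im λ = 0 and Re λ > 0. -/
open MeasureTheory

/-- `lam` is an eigenvalue of the imaginary cubic oscillator `H = p² + i x³`:
there is a nonzero, twice continuously differentiable, square-integrable
`ψ : ℝ → ℂ` with `-ψ'' + i x³ ψ = lam ψ`. -/
def IsEigenvalueICO (lam : ℂ) : Prop :=
  ∃ ψ : ℝ → ℂ, ψ ≠ 0 ∧ ContDiff ℝ 2 ψ ∧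
    Integrable (fun x : ℝ => ‖ψ x‖ ^ 2) ∧
    ∀ x : ℝ, -(deriv (deriv ψ) x) + Complex.I * (x : ℂ) ^ 3 * ψ x = lam * ψ x


/-- Mean value inequality with a comparison function. -/
theorem ico_mv {g g' : ℝ → ℂ} {B B' : ℝ → ℝ} {a b : ℝ} (hab : a ≤ b)
    (hg : ∀ x ∈ Set.Icc a b, HasDerivAt g (g' x) x)
    (hB : ∀ x ∈ Set.Icc a b, HasDerivAt B (B' x) x)
    (h : ∀ x ∈ Set.Icc a b, ‖g' x‖ ≤ B' x) : ‖g b - g a‖ ≤ B b - B a := by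
  have key := image_norm_le_of_norm_deriv_right_le_deriv_boundary' (f := fun x => g x - g a)
    (f' := g') (a := a) (b := b) (B := fun x => B x - B a) (B' := B')
    (fun x hx => ((hg x hx).continuousAt.sub continuousAt_const).continuousWithinAt)
    (fun x hx => ((hg x ⟨hx.1, hx.2.le⟩).sub_const _).hasDerivWithinAt)
    (by simp)
    (fun x hx => ((hB x hx).continuousAt.sub continuousAt_const).continuousWithinAt)
    (fun x hx => ((hB x ⟨hx.1, hx.2.le⟩).sub_const _).hasDerivWithinAt)
    (fun x hx => h x ⟨hx.1, hx.2.le⟩)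
  exact key ⟨hab, le_refl b⟩

/-- real mean value: derivative lower bound -/
theorem ico_mono {g g' : ℝ → ℝ} {a b : ℝ} (hab : a ≤ b) (c : ℝ)
    (hg : ∀ x ∈ Set.Icc a b, HasDerivAt g (g' x) x)
    (h : ∀ x ∈ Set.Icc a b, c ≤ g' x) : c * (b - a) ≤ g b - g a := by
  have hm : MonotoneOn (fun x => g x - c * x) (Set.Icc a b) := by
    apply monotoneOn_of_hasDerivWithinAt_nonneg (f' := fun x => g' x - c * 1) (convex_Icc a b)
    · intro x hx
      exact ((hg x hx).continuousAt.sub (by fun_prop)).continuousWithinAt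
    · intro x hx
      have hx' := interior_subset hx
      exact ((hg x hx').sub ((hasDerivAt_id x).const_mul c)).hasDerivWithinAt
    · intro x hx
      have := h x (interior_subset hx)
      linarith
  have := hm ⟨le_refl a, hab⟩ ⟨hab, le_refl b⟩ hab
  simp only at this
  linarith

/-- uniqueness for linear second order ODE -/
theorem ico_unique {y y1 P : ℝ → ℂ} (hP : Continuous P) (a : ℝ)
    (hy : ∀ t, HasDerivAt y (y1 t) t) (hy1 : ∀ t, HasDerivAt y1 (P t * y t) t)
    (h0 : y a = 0) (h1 : y1 a = 0) : ∀ t, y t = 0 := by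
  intro t
  obtain ⟨N, hN⟩ : ∃ N : ℝ, |a| < N ∧ |t| < N := ⟨|a| + |t| + 1, by
    have := abs_nonneg a; have := abs_nonneg t; constructor <;> linarith⟩
  obtain ⟨C, hC⟩ := (isCompact_Icc (a := -N) (b := N)).exists_bound_of_continuousOn hP.continuousOn
  have hC0 : 0 ≤ C := le_trans (norm_nonneg _) (hC a (abs_le.1 hN.1.le))
  let v : ℝ → ℂ × ℂ → ℂ × ℂ := fun t w => (w.2, P t * w.1)
  have hv : ∀ t ∈ Set.Ioo (-N) N, LipschitzOnWith (⟨C + 1, by linarith⟩ : NNReal) (v t) Set.univ := by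
    intro t ht
    apply LipschitzOnWith.of_dist_le_mul
    intro x _ w _
    have h1 := hC t ⟨ht.1.le, ht.2.le⟩
    have e1 : dist (v t x) (v t w) = max ‖x.2 - w.2‖ (‖P t‖ * ‖x.1 - w.1‖) := by
      rw [Prod.dist_eq, dist_eq_norm, dist_eq_norm, ← norm_mul, mul_sub]
    have e2 : dist x w = max ‖x.1 - w.1‖ ‖x.2 - w.2‖ := by
      rw [Prod.dist_eq, dist_eq_norm, dist_eq_norm]
    rw [e1, e2]
    show _ ≤ (C + 1) * _
    have hm1 := le_max_left ‖x.1 - w.1‖ ‖x.2 - w.2‖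
    have hm2 := le_max_right ‖x.1 - w.1‖ ‖x.2 - w.2‖
    have hn := norm_nonneg (x.1 - w.1)
    apply max_le
    · nlinarith [norm_nonneg (x.2 - w.2)]
    · calc ‖P t‖ * ‖x.1 - w.1‖ ≤ C * ‖x.1 - w.1‖ := by gcongr
        _ ≤ (C + 1) * _ := by gcongr; linarith
  have := ODE_solution_unique_of_mem_Ioo (v := v) (s := fun _ => Set.univ) (a := -N) (b := N)
    (t₀ := a) (f := fun t => (y t, y1 t)) (g := fun _ => (0, 0)) hv (abs_lt.1 hN.1)
    (fun t _ => ⟨(hy t).prodMk (hy1 t), trivial⟩)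
    (fun t _ => ⟨by
      have e0 : v t (0, 0) = 0 := by simp [v]
      rw [e0]; exact hasDerivAt_const t ((0 : ℂ), (0 : ℂ)), trivial⟩) (by simp [h0, h1])
  have h2 := this (abs_lt.1 hN.2)
  simpa using congrArg Prod.fst h2

theorem ico_series (a : ℕ → ℂ) (ha : ∀ R : ℝ, 0 ≤ R → ∃ C, ∀ n, ‖a n‖ * R ^ n ≤ C) :
    (∀ z : ℂ, Summable (fun n => a n * z ^ n)) ∧
    (∀ R : ℝ, 0 ≤ R → ∃ C, ∀ n : ℕ, ‖((n : ℂ) + 1) * a (n + 1)‖ * R ^ n ≤ C) ∧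
    ∀ z : ℂ, HasDerivAt (fun z => ∑' n, a n * z ^ n) (∑' n : ℕ, (((n : ℂ) + 1) * a (n + 1)) * z ^ n) z := by
  have hsum : ∀ (b : ℕ → ℂ), (∀ R : ℝ, 0 ≤ R → ∃ C, ∀ n, ‖b n‖ * R ^ n ≤ C) → ∀ R : ℝ, 0 < R →
      Summable (fun n => ‖b n‖ * R ^ n) := by
    intro b hb R hR
    obtain ⟨C, hC⟩ := hb (2 * R) (by linarith)
    refine Summable.of_nonneg_of_le (fun n => by positivity) (fun n => ?_)
      ((summable_geometric_of_lt_one (r := (1/2 : ℝ)) (by norm_num) (by norm_num)).mul_left C)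
    have := hC n
    rw [mul_pow] at this
    calc ‖b n‖ * R ^ n = (‖b n‖ * (2 ^ n * R ^ n)) * (1/2)^n := by
          rw [one_div, inv_pow]; field_simp
      _ ≤ C * (1/2)^n := by gcongr
  have hb : ∀ R : ℝ, 0 ≤ R → ∃ C, ∀ n : ℕ, ‖((n : ℂ) + 1) * a (n + 1)‖ * R ^ n ≤ C := by
    intro R hR
    obtain ⟨C, hC⟩ := ha (2 * R + 2) (by linarith)
    refine ⟨C, fun n => ?_⟩
    have h1 := hC (n + 1)
    have h2 : ((n : ℝ) + 1) ≤ 2 ^ (n+1) := by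
      have := (Nat.lt_two_pow_self (n := n + 1)).le
      exact_mod_cast this
    have h3 : ‖((n : ℂ) + 1)‖ = n + 1 := by
      have : ((n : ℂ) + 1) = ((n + 1 : ℕ) : ℂ) := by push_cast; ring
      rw [this, Complex.norm_natCast]; push_cast; ring
    rw [norm_mul, h3]
    refine le_trans ?_ h1
    have h4 : R ^ n ≤ (R + 1) ^ (n + 1) := by
      calc R ^ n ≤ (R+1) ^ n := by gcongr; linarith
        _ ≤ (R+1)^(n+1) := pow_le_pow_right₀ (by linarith) (by omega)
    have h5 : (2 * R + 2) ^ (n+1) = 2 ^ (n+1) * (R + 1) ^ (n + 1) := by rw [← mul_pow]; ring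
    rw [h5]
    calc (n + 1) * ‖a (n+1)‖ * R ^ n ≤ 2 ^ (n+1) * ‖a (n+1)‖ * (R + 1) ^ (n + 1) := by gcongr
      _ = _ := by ring
  refine ⟨?_, hb, ?_⟩
  · intro z
    apply Summable.of_norm
    refine Summable.of_nonneg_of_le (fun n => norm_nonneg _) (fun n => ?_) (hsum a ha (‖z‖ + 1) (by positivity))
    rw [norm_mul, norm_pow]
    gcongr; linarith
  · intro z
    have hz : z ∈ Metric.ball (0:ℂ) (‖z‖ + 1) := by simp
    have hs2 := hsum _ hb (‖z‖ + 1) (by positivity)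
    have hs3 : Summable (fun n : ℕ => ‖a n‖ * (n * (‖z‖+1) ^ (n-1))) := by
      rw [← summable_nat_add_iff 1]
      refine hs2.congr fun n => ?_
      have h3 : ‖((n : ℂ) + 1)‖ = n + 1 := by
        have : ((n : ℂ) + 1) = ((n + 1 : ℕ) : ℂ) := by push_cast; ring
        rw [this, Complex.norm_natCast]; push_cast; ring
      rw [norm_mul, h3]; push_cast; ring
    have key := hasDerivAt_tsum_of_isPreconnected (g := fun n z => a n * z ^ n)
      (g' := fun n z => a n * (n * z ^ (n-1))) (t := Metric.ball (0:ℂ) (‖z‖ + 1)) hs3 Metric.isOpen_ball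
      (convex_ball _ _).isPreconnected
      (fun n y hy => (hasDerivAt_pow n y).const_mul (a n))
      (fun n y hy => by
        rw [norm_mul, norm_mul, norm_pow, Complex.norm_natCast]
        have : ‖y‖ ≤ ‖z‖ + 1 := (mem_ball_zero_iff.1 hy).le
        gcongr)
      (y₀ := 0) (by simp; positivity)
      (summable_of_ne_finset_zero (s := {0}) (fun n hn => by simp at hn; simp [hn])) hz
    have hs4 : Summable (fun n : ℕ => a n * (n * z ^ (n-1))) := by
      apply Summable.of_norm_bounded hs3
      intro n
      rw [norm_mul, norm_mul, norm_pow, Complex.norm_natCast]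
      gcongr; linarith
    have e : (∑' n : ℕ, (((n : ℂ) + 1) * a (n + 1)) * z ^ n) = ∑' n : ℕ, a n * (n * z ^ (n-1)) := by
      rw [hs4.tsum_eq_zero_add]
      simp only [Nat.cast_zero, zero_mul, mul_zero, zero_add, Nat.add_sub_cancel]
      congr 1; ext n; push_cast; ring
    rw [e]; exact key

/-- coefficients of the power series solution of `f'' = (z^3 + lam) f`. -/
noncomputable def icoCoeff (lam a0 a1 : ℂ) : ℕ → ℂ
  | 0 => a0
  | 1 => a1
  | 2 => lam * a0 / 2
  | 3 => lam * a1 / 6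
  | 4 => lam * (lam * a0 / 2) / 12
  | (n + 5) => (icoCoeff lam a0 a1 n + lam * icoCoeff lam a0 a1 (n + 3)) / (((n : ℂ) + 5) * ((n : ℂ) + 4))

theorem icoCoeff_bound (lam a0 a1 : ℂ) (R : ℝ) (hR : 0 ≤ R) :
    ∃ C, ∀ n, ‖icoCoeff lam a0 a1 n‖ * R ^ n ≤ C := by
  obtain ⟨N, hN⟩ := exists_nat_ge (R ^ 5 + ‖lam‖ * R ^ 2)
  let C := ∑ k ∈ Finset.range (N + 5), ‖icoCoeff lam a0 a1 k‖ * R ^ k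
  refine ⟨C, fun n => ?_⟩
  have hC0 : 0 ≤ C := Finset.sum_nonneg fun k _ => by positivity
  induction n using Nat.strong_induction_on with
  | _ n ih =>
    by_cases hn : n < N + 5
    · exact Finset.single_le_sum (f := fun k => ‖icoCoeff lam a0 a1 k‖ * R ^ k)
        (fun k _ => by positivity) (Finset.mem_range.2 hn)
    · obtain ⟨m, rfl⟩ : ∃ m, n = m + 5 := ⟨n - 5, by omega⟩
      have hm : N ≤ m := by omega
      have hmR : (N : ℝ) ≤ m := by exact_mod_cast hm
      rw [icoCoeff]
      have i1 := ih m (by omega)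
      have i2 := ih (m + 3) (by omega)
      have hnorm : ‖(((m : ℂ) + 5) * ((m : ℂ) + 4))‖ = (m + 5) * (m + 4) := by
        have : (((m : ℂ) + 5) * ((m : ℂ) + 4)) = (((m + 5) * (m + 4) : ℕ) : ℂ) := by push_cast; ring
        rw [this, Complex.norm_natCast]; push_cast; ring
      rw [norm_div, hnorm, div_mul_eq_mul_div, div_le_iff₀ (by positivity)]
      calc ‖icoCoeff lam a0 a1 m + lam * icoCoeff lam a0 a1 (m+3)‖ * R ^ (m+5)
          ≤ (‖icoCoeff lam a0 a1 m‖ + ‖lam‖ * ‖icoCoeff lam a0 a1 (m+3)‖) * R ^ (m+5) := by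
            gcongr
            refine (norm_add_le _ _).trans ?_
            rw [norm_mul]
        _ = (‖icoCoeff lam a0 a1 m‖ * R ^ m) * R ^ 5 + (‖icoCoeff lam a0 a1 (m+3)‖ * R ^ (m+3)) * (‖lam‖ * R ^ 2) := by ring
        _ ≤ C * R ^ 5 + C * (‖lam‖ * R ^ 2) := by gcongr
        _ = C * (R ^ 5 + ‖lam‖ * R ^ 2) := by ring
        _ ≤ C * ((m + 5) * (m + 4)) := by
            gcongr
            nlinarith

/-- entire solution of `f'' = (z^3 + lam) f` with prescribed data at `0`. -/
theorem ico_entire (lam a0 a1 : ℂ) : ∃ f f' : ℂ → ℂ, f 0 = a0 ∧ f' 0 = a1 ∧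
    (∀ z, HasDerivAt f (f' z) z) ∧ ∀ z, HasDerivAt f' ((z ^ 3 + lam) * f z) z := by
  set a := icoCoeff lam a0 a1 with ha
  obtain ⟨s0, b1, d1⟩ := ico_series a (icoCoeff_bound lam a0 a1)
  obtain ⟨s1, b2, d2⟩ := ico_series _ b1
  obtain ⟨s2, -, -⟩ := ico_series _ b2
  refine ⟨fun z => ∑' n, a n * z ^ n, fun z => ∑' n : ℕ, (((n : ℂ) + 1) * a (n + 1)) * z ^ n, ?_, ?_, d1, ?_⟩
  · simp only
    rw [tsum_eq_single 0 (fun n hn => by simp [hn])]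
    simp [ha, icoCoeff]
  · simp only
    rw [tsum_eq_single 0 (fun n hn => by simp [hn])]
    simp [ha, icoCoeff]
  · intro z
    convert d2 z using 1
    rw [add_mul, ← tsum_mul_left, ← tsum_mul_left, ← (s2 z).sum_add_tsum_nat_add 3,
      ← ((s0 z).mul_left lam).sum_add_tsum_nat_add 3]
    rw [add_left_comm, ← (((s0 z).mul_left (z^3)).tsum_add
      ((summable_nat_add_iff 3).2 ((s0 z).mul_left lam)))]
    congr 1
    · simp [Finset.sum_range_succ, ha, icoCoeff]; ring
    · congr 1; ext n
      have e : a (n + 5) = (a n + lam * a (n + 3)) / (((n : ℂ) + 5) * ((n : ℂ) + 4)) := by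
        rw [ha, icoCoeff]
      have h5 : ((n : ℂ) + 5) ≠ 0 := by exact_mod_cast (by omega : n + 5 ≠ 0)
      have h4 : ((n : ℂ) + 4) ≠ 0 := by exact_mod_cast (by omega : n + 4 ≠ 0)
      have : n + 3 + 1 + 1 = n + 5 := by ring
      rw [this, e]
      push_cast
      have h6 : (n : ℂ) + 3 + 1 + 1 = n + 5 := by ring
      have h7 : (n : ℂ) + 3 + 1 = n + 4 := by ring
      rw [h6, h7]
      field_simp
      ring

/-- Abstract version of the Liouville-Green estimate. -/
theorem ico_volterra {A q v : ℝ → ℂ} {E : ℝ → ℂ} {B B' : ℝ → ℝ} {ε : ℝ}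
    (hε0 : 0 ≤ ε) (hε : ε ≤ 1 / 8)
    (hE0 : ∀ s, 0 ≤ s → E s ≠ 0) (hEc : ∀ s, 0 ≤ s → ContinuousAt E s)
    (hEa : ∀ s t, 0 ≤ s → s ≤ t → ‖E t‖ ≤ ‖E s‖)
    (hA : ∀ s, 0 ≤ s → HasDerivAt A (v s * (A s - q s / E s)) s)
    (hq : ∀ s, 0 ≤ s → HasDerivAt q (E s * v s * (A s - q s / E s)) s)
    (hB : ∀ s, 0 ≤ s → HasDerivAt B (B' s) s)
    (hv : ∀ s, 0 ≤ s → ‖v s‖ ≤ B' s)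
    (hBε : ∀ s t, 0 ≤ s → s ≤ t → B t - B s ≤ ε)
    (hfreq : ∀ δ > 0, ∀ S : ℝ, ∃ s ≥ S, ‖q s‖ < δ) :
    ∀ s, 0 ≤ s → ‖(A s - q s / E s) - (A 0 - q 0 / E 0)‖ ≤ 24 * ε * ‖A 0 - q 0 / E 0‖ ∧
      ‖q s / E s‖ ≤ 8 * ε * ‖A 0 - q 0 / E 0‖ := by
  have hEp : ∀ s, 0 ≤ s → 0 < ‖E s‖ := fun s hs => norm_pos_iff.2 (hE0 s hs)
  -- basic estimates
  have estA : ∀ s T m, 0 ≤ s → s ≤ T → 0 ≤ m → (∀ x ∈ Set.Icc s T, ‖A x - q x / E x‖ ≤ m) →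
      ‖A T - A s‖ ≤ ε * m := by
    intro s T m hs hsT hm hh
    have := ico_mv (g := A) (B := fun x => B x * m) (B' := fun x => B' x * m) hsT
      (fun x hx => hA x (hs.trans hx.1)) (fun x hx => (hB x (hs.trans hx.1)).mul_const m)
      (fun x hx => by
        rw [norm_mul]
        exact mul_le_mul (hv x (hs.trans hx.1)) (hh x hx) (norm_nonneg _)
          ((norm_nonneg _).trans (hv x (hs.trans hx.1))))
    have h2 := hBε s T hs hsT
    nlinarith
  have estq : ∀ s T m, 0 ≤ s → s ≤ T → 0 ≤ m →
      (∀ x ∈ Set.Icc s T, ‖E x * (A x - q x / E x)‖ ≤ m) →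
      ‖q T - q s‖ ≤ ε * m := by
    intro s T m hs hsT hm hh
    have := ico_mv (g := q) (B := fun x => B x * m) (B' := fun x => B' x * m) hsT
      (fun x hx => hq x (hs.trans hx.1)) (fun x hx => (hB x (hs.trans hx.1)).mul_const m)
      (fun x hx => by
        rw [show E x * v x * (A x - q x / E x) = v x * (E x * (A x - q x / E x)) by ring, norm_mul]
        exact mul_le_mul (hv x (hs.trans hx.1)) (hh x hx) (norm_nonneg _)
          ((norm_nonneg _).trans (hv x (hs.trans hx.1))))
    have h2 := hBε s T hs hsT
    nlinarith
  have estk : ∀ s T m, 0 ≤ s → s ≤ T → 0 ≤ m → (∀ x ∈ Set.Icc s T, ‖A x - q x / E x‖ ≤ m) →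
      ‖q s‖ ≤ ‖q T‖ + ‖E s‖ * (ε * m) := by
    intro s T m hs hsT hm hh
    have h1 := estq s T (‖E s‖ * m) hs hsT (by positivity) (fun x hx => by
      rw [norm_mul]
      exact mul_le_mul (hEa s x hs hx.1) (hh x hx) (norm_nonneg _) (norm_nonneg _))
    have h2 : ‖q s‖ ≤ ‖q T‖ + ‖q T - q s‖ := by
      have := norm_sub_le (q T) (q T - q s)
      simpa using this
    linarith
  -- step 1
  have step1 : ∀ S, 0 ≤ S → ∃ T ≥ S, ‖q T / E T‖ ≤ ‖A T‖ := by
    intro S hS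
    by_contra! hcon
    have hqb : ∀ T ≥ S, ‖q S‖ ≤ 2 * ‖q T‖ := by
      intro T hT
      have hcont : ContinuousOn (fun x => ‖q x‖) (Set.Icc S T) :=
        fun x hx => (hq x (hS.trans hx.1)).continuousAt.norm.continuousWithinAt
      obtain ⟨x, hx, hmax⟩ := isCompact_Icc.exists_isMaxOn ⟨S, le_refl S, hT⟩ hcont
      have hmax' : ∀ y ∈ Set.Icc S T, ‖q y‖ ≤ ‖q x‖ := fun y hy => hmax hy
      have h1 := estq x T (2 * ‖q x‖) (hS.trans hx.1) hx.2 (by positivity) (fun y hy => by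
        have hyS : S ≤ y := hx.1.trans hy.1
        have h3 := hcon y hyS
        have h4 := hmax' y ⟨hyS, hy.2⟩
        rw [norm_mul]
        have h5 : ‖A y - q y / E y‖ ≤ 2 * ‖q y / E y‖ := by
          have := norm_sub_le (A y) (q y / E y); linarith
        have hp := hEp y (hS.trans hyS)
        calc ‖E y‖ * ‖A y - q y / E y‖ ≤ ‖E y‖ * (2 * ‖q y / E y‖) := by gcongr
          _ = 2 * ‖q y‖ := by rw [norm_div]; field_simp
          _ ≤ _ := by linarith)
      have h2 : ‖q x‖ ≤ ‖q T‖ + ‖q T - q x‖ := by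
        have := norm_sub_le (q T) (q T - q x)
        simpa using this
      have h3 := hmax' S ⟨le_refl S, hT⟩
      nlinarith [norm_nonneg (q x)]
    have hqS : 0 < ‖q S‖ := by
      have h1 := hcon S le_rfl
      have h2 : 0 < ‖q S / E S‖ := lt_of_le_of_lt (norm_nonneg _) h1
      rw [norm_div] at h2
      by_contra h
      have : ‖q S‖ = 0 := le_antisymm (not_lt.1 h) (norm_nonneg _)
      rw [this] at h2; simp at h2
    obtain ⟨T, hT, hlt⟩ := hfreq (‖q S‖ / 2) (by linarith) S
    have := hqb T hT
    linarith
  -- step 2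
  have step2 : ∀ s, 0 ≤ s → ‖A s - q s / E s‖ ≤ 4 * ‖A 0‖ := by
    intro s hs
    obtain ⟨T, hT, hk⟩ := step1 s hs
    have hT0 : 0 ≤ T := hs.trans hT
    have hcont : ContinuousOn (fun x => ‖A x - q x / E x‖) (Set.Icc 0 T) := by
      intro x hx
      exact ((hA x hx.1).continuousAt.sub ((hq x hx.1).continuousAt.div (hEc x hx.1) (hE0 x hx.1))).norm.continuousWithinAt
    obtain ⟨x, hx, hmax⟩ := isCompact_Icc.exists_isMaxOn ⟨0, le_refl 0, hT0⟩ hcont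
    have hmax' : ∀ y ∈ Set.Icc 0 T, ‖A y - q y / E y‖ ≤ ‖A x - q x / E x‖ := fun y hy => hmax hy
    set m := ‖A x - q x / E x‖ with hm
    have hm0 : 0 ≤ m := norm_nonneg _
    have a1 := estA 0 T m le_rfl hT0 hm0 hmax'
    have a2 := estA 0 x m le_rfl hx.1 hm0 (fun y hy => hmax' y ⟨hy.1, hy.2.trans hx.2⟩)
    have a3 := estk x T m hx.1 hx.2 hm0 (fun y hy => hmax' y ⟨hx.1.trans hy.1, hy.2⟩)
    have b1 : ‖A T‖ ≤ ‖A 0‖ + ε * m := by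
      have := norm_add_le (A T - A 0) (A 0); simp at this; linarith
    have b2 : ‖A x‖ ≤ ‖A 0‖ + ε * m := by
      have := norm_add_le (A x - A 0) (A 0); simp at this; linarith
    have b3 : ‖q x / E x‖ ≤ ‖A 0‖ + 2 * (ε * m) := by
      have hp := hEp x hx.1
      have hpT := hEp T hT0
      rw [norm_div, div_le_iff₀ hp]
      rw [norm_div, div_le_iff₀ hpT] at hk
      have hle := hEa x T hx.1 hx.2
      have : ‖q T‖ ≤ (‖A 0‖ + ε * m) * ‖E x‖ := hk.trans (by gcongr)
      linarith
    have b4 : m ≤ ‖A x‖ + ‖q x / E x‖ := norm_sub_le _ _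
    have b5 : m ≤ 4 * ‖A 0‖ := by nlinarith [norm_nonneg (A 0)]
    exact (hmax' s ⟨hs, hT⟩).trans b5
  -- step 3
  have step3 : ∀ s, 0 ≤ s → ‖q s / E s‖ ≤ ε * (4 * ‖A 0‖) := by
    intro s hs
    have hp := hEp s hs
    rw [norm_div, div_le_iff₀ hp]
    apply le_of_forall_pos_le_add
    intro δ hδ
    obtain ⟨T, hT, hlt⟩ := hfreq δ hδ s
    have := estk s T (4 * ‖A 0‖) hs hT (by positivity) (fun x hx => step2 x (hs.trans hx.1))
    linarith
  intro s hs
  have c1 := step3 s hs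
  have c2 := step3 0 le_rfl
  have c3 := estA 0 s (4 * ‖A 0‖) le_rfl hs (by positivity) (fun x hx => step2 x hx.1)
  have c4 : ‖A 0‖ ≤ 2 * ‖A 0 - q 0 / E 0‖ := by
    have := norm_add_le (A 0 - q 0 / E 0) (q 0 / E 0)
    simp at this
    have h3 : ‖q 0 / E 0‖ = ‖q 0‖ / ‖E 0‖ := norm_div _ _
    nlinarith [norm_nonneg (A 0)]
  constructor
  · have e : (A s - q s / E s) - (A 0 - q 0 / E 0) = (A s - A 0) - q s / E s + q 0 / E 0 := by ring
    rw [e]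
    have h1 := norm_add_le ((A s - A 0) - q s / E s) (q 0 / E 0)
    have h2 := norm_sub_le (A s - A 0) (q s / E s)
    nlinarith
  · nlinarith

theorem ico_primitive {p : ℝ → ℝ} (hc : Continuous p) (h0 : ∀ x, 0 ≤ p x) (hi : Integrable p) :
    ∃ (P : ℝ → ℝ) (J : ℝ), (∀ x, HasDerivAt P (p x) x) ∧ ∀ a b, P b - P a ≤ J := by
  refine ⟨fun x => ∫ t in (0:ℝ)..x, p t, ∫ t, p t, fun x => ?_, fun a b => ?_⟩
  · exact hc.integral_hasStrictDerivAt 0 x |>.hasDerivAt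
  · rw [intervalIntegral.integral_interval_sub_left (hc.intervalIntegrable _ _) (hc.intervalIntegrable _ _)]
    rcases le_total a b with h | h
    · rw [intervalIntegral.integral_of_le h]
      exact setIntegral_le_integral hi (Filter.Eventually.of_forall h0)
    · have h1 := intervalIntegral.integral_nonneg (μ := volume) h (fun x _ => h0 x)
      rw [intervalIntegral.integral_symm]
      have h2 : 0 ≤ ∫ t, p t := integral_nonneg h0
      linarith

theorem ico_re_deriv {g : ℝ → ℂ} {g' : ℂ} {x : ℝ} (h : HasDerivAt g g' x) :
    HasDerivAt (fun t => (g t).re) g'.re x ∧ HasDerivAt (fun t => (g t).im) g'.im x :=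
  ⟨(Complex.reCLM.hasFDerivAt (x := g x)).comp_hasDerivAt x h,
   (Complex.imCLM.hasFDerivAt (x := g x)).comp_hasDerivAt x h⟩

theorem ico_normsq_deriv {g : ℝ → ℂ} {g' : ℂ} {x : ℝ} (h : HasDerivAt g g' x) :
    HasDerivAt (fun t => ‖g t‖ ^ 2) (2 * ((g x).re * g'.re + (g x).im * g'.im)) x := by
  obtain ⟨h1, h2⟩ := ico_re_deriv h
  have e : (fun t => ‖g t‖ ^ 2) = fun t => (g t).re ^ 2 + (g t).im ^ 2 := by
    funext t; rw [Complex.sq_norm, Complex.normSq_apply]; ring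
  rw [e]
  refine ((h1.pow 2).add (h2.pow 2)).congr_deriv ?_
  simp; ring

/-- positivity of the real part -/
theorem ico_re_pos {lam : ℂ} {ψ ψ1 : ℝ → ℂ} (h1 : ∀ x, HasDerivAt ψ (ψ1 x) x)
    (h2 : ∀ x : ℝ, HasDerivAt ψ1 ((Complex.I * (x:ℂ) ^ 3 - lam) * ψ x) x)
    (hi : Integrable (fun x => ‖ψ x‖ ^ 2)) (x0 : ℝ) (hne : ψ x0 ≠ 0) : 0 < lam.re := by
  by_contra hlam
  push Not at hlam
  have hc : Continuous ψ := continuous_iff_continuousAt.2 fun x => (h1 x).continuousAt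
  obtain ⟨P, J, hP, hJ⟩ := ico_primitive (p := fun x => ‖ψ x‖ ^ 2) (by fun_prop) (fun x => by positivity) hi
  set w : ℝ → ℝ := fun x => 2 * ((ψ x).re * (ψ1 x).re + (ψ x).im * (ψ1 x).im) with hw
  have hp : ∀ x, HasDerivAt (fun t => ‖ψ t‖ ^ 2) (w x) x := fun x => ico_normsq_deriv (h1 x)
  have hw' : ∀ x, HasDerivAt w (2 * (((ψ1 x).re ^ 2 + (ψ1 x).im ^ 2) - lam.re * ((ψ x).re ^ 2 + (ψ x).im ^2))) x := by
    intro x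
    obtain ⟨a1, a2⟩ := ico_re_deriv (h1 x)
    obtain ⟨b1, b2⟩ := ico_re_deriv (h2 x)
    refine (((a1.mul b1).add (a2.mul b2)).const_mul 2).congr_deriv ?_
    have e : ((x:ℂ)^3) = ((x^3 : ℝ) : ℂ) := by push_cast; ring
    simp only [e, Complex.mul_re, Complex.mul_im, Complex.sub_re, Complex.sub_im, Complex.I_re, Complex.I_im,
      Complex.ofReal_re, Complex.ofReal_im]
    ring
  have hmono : ∀ a b, a ≤ b → w a ≤ w b := by
    intro a b hab
    have := ico_mono hab 0 (fun x _ => hw' x) (fun x _ => by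
      nlinarith [sq_nonneg (ψ1 x).re, sq_nonneg (ψ1 x).im, sq_nonneg (ψ x).re, sq_nonneg (ψ x).im,
        mul_nonneg (neg_nonneg.2 hlam) (add_nonneg (sq_nonneg (ψ x).re) (sq_nonneg (ψ x).im))])
    linarith
  have hpos : 0 < ‖ψ x0‖ ^ 2 := by have := norm_pos_iff.2 hne; positivity
  set c := ‖ψ x0‖ ^ 2 with hcdef
  have hJ0 : 0 ≤ J := by have := hJ 0 0; linarith
  rcases le_total 0 (w x0) with h | h
  · have hge : ∀ x ≥ x0, c ≤ ‖ψ x‖ ^ 2 := by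
      intro x hx
      have := ico_mono hx 0 (fun y _ => hp y) (fun y hy => h.trans (hmono _ _ hy.1))
      linarith
    have hx : x0 ≤ x0 + (J + 1) / c := by have : 0 ≤ (J + 1) / c := by positivity
                                          linarith
    have := ico_mono hx c (fun y _ => hP y) (fun y hy => hge y hy.1)
    have h3 := hJ x0 (x0 + (J + 1) / c)
    have h4 : c * (x0 + (J + 1) / c - x0) = J + 1 := by field_simp; ring
    linarith
  · have hge : ∀ x ≤ x0, c ≤ ‖ψ x‖ ^ 2 := by
      intro x hx
      have := ico_mono (g := fun t => - ‖ψ t‖ ^ 2) hx 0 (fun y _ => (hp y).neg)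
        (fun y hy => by have := hmono _ _ hy.2; linarith)
      linarith
    have hx : x0 - (J + 1) / c ≤ x0 := by have : 0 ≤ (J + 1) / c := by positivity
                                          linarith
    have := ico_mono hx c (fun y _ => hP y) (fun y hy => hge y hy.2)
    have h3 := hJ (x0 - (J + 1) / c) x0
    have h4 : c * (x0 - (x0 - (J + 1) / c)) = J + 1 := by field_simp; ring
    linarith

/-- decay of square integrable solutions along the imaginary axis -/
theorem ico_decay {lam : ℂ} {ψ ψ1 : ℝ → ℂ} (h1 : ∀ x, HasDerivAt ψ (ψ1 x) x)
    (h2 : ∀ x : ℝ, HasDerivAt ψ1 ((Complex.I * (x:ℂ) ^ 3 - lam) * ψ x) x)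
    (hi : Integrable (fun x => ‖ψ x‖ ^ 2)) (K : ℝ) (hK : 0 ≤ K) (ε : ℝ) (hε : 0 < ε) (S0 : ℝ) :
    ∃ s ≥ S0, (‖ψ1 s‖ ^ 2 + s ^ 3 * ‖ψ s‖ ^ 2 / 2) * Real.exp (K * s ^ 2) < ε := by
  have hc : Continuous ψ := continuous_iff_continuousAt.2 fun x => (h1 x).continuousAt
  obtain ⟨P, J, hP, hJ⟩ := ico_primitive (p := fun x => ‖ψ x‖ ^ 2) (by fun_prop) (fun x => by positivity) hi
  set Φ : ℝ → ℝ := fun s => (ψ1 s).re * ((ψ s).re - (ψ s).im) + (ψ1 s).im * ((ψ s).re + (ψ s).im) with hΦ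
  set Φ' : ℝ → ℝ := fun s => ‖ψ1 s‖ ^ 2 + (s ^ 3 - lam.re - lam.im) * ‖ψ s‖ ^ 2 with hΦ'
  have hn : ∀ z : ℂ, ‖z‖ ^ 2 = z.re ^ 2 + z.im ^ 2 := by
    intro z; rw [Complex.sq_norm, Complex.normSq_apply]; ring
  have hd : ∀ s, HasDerivAt Φ (Φ' s) s := by
    intro x
    obtain ⟨a1, a2⟩ := ico_re_deriv (h1 x)
    obtain ⟨b1, b2⟩ := ico_re_deriv (h2 x)
    refine ((b1.mul (a1.sub a2)).add (b2.mul (a1.add a2))).congr_deriv ?_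
    have e : ((x:ℂ)^3) = ((x^3 : ℝ) : ℂ) := by push_cast; ring
    simp only [hΦ', hn, e, Complex.mul_re, Complex.mul_im, Complex.sub_re, Complex.sub_im, Complex.I_re, Complex.I_im,
      Complex.ofReal_re, Complex.ofReal_im, Pi.add_apply, Pi.sub_apply]
    ring
  have hcs : ∀ s, Φ s ^ 2 ≤ 2 * ‖ψ1 s‖ ^ 2 * ‖ψ s‖ ^ 2 := by
    intro s
    simp only [hΦ, hn]
    nlinarith [sq_nonneg ((ψ1 s).re * ((ψ s).re + (ψ s).im) - (ψ1 s).im * ((ψ s).re - (ψ s).im))]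
  set s0 : ℝ := 1 + 2 * (|lam.re| + |lam.im|) with hs0
  have hs01 : 1 ≤ s0 := by have := abs_nonneg lam.re; have := abs_nonneg lam.im; linarith
  have hlow : ∀ s ≥ s0, ‖ψ1 s‖ ^ 2 + s ^ 3 * ‖ψ s‖ ^ 2 / 2 ≤ Φ' s := by
    intro s hs
    have hs1 : 1 ≤ s := hs01.trans hs
    have h3 : s ≤ s ^ 3 := by nlinarith [sq_nonneg (s - 1), mul_nonneg (by linarith : (0:ℝ) ≤ s) (by nlinarith : (0:ℝ) ≤ s^2 - 1)]
    have h4 := le_abs_self lam.re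
    have h5 := le_abs_self lam.im
    have h6 : s ^ 3 / 2 ≤ s ^ 3 - lam.re - lam.im := by linarith
    have h7 : s ^ 3 / 2 * ‖ψ s‖ ^ 2 ≤ (s ^ 3 - lam.re - lam.im) * ‖ψ s‖ ^ 2 := by gcongr
    simp only [hΦ']
    linarith
  have hq : ∀ s ≥ s0, ‖ψ1 s‖ ^ 2 ≤ Φ' s := by
    intro s hs
    have := hlow s hs
    have h4 : 0 ≤ s := by linarith
    have h3 : 0 ≤ s ^ 3 * ‖ψ s‖ ^ 2 / 2 := by positivity
    linarith
  have claim1 : ∀ s ≥ s0, Φ s ≤ 0 := by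
    intro s hs
    by_contra! hpos
    have hmono : ∀ t ≥ s, Φ s ≤ Φ t := by
      intro t ht
      have := ico_mono ht 0 (fun y _ => hd y) (fun y hy => (by positivity : (0:ℝ) ≤ ‖ψ1 y‖ ^ 2).trans (hq y (hs.le.trans hy.1)))
      linarith
    have hposall : ∀ t ≥ s, 0 < Φ t := fun t ht => hpos.trans_le (hmono t ht)
    have hb : s ≤ s + (J + 1 / Φ s + 1) := by
      have hJ0 : 0 ≤ J := by have := hJ 0 0; linarith
      have : 0 ≤ 1 / Φ s := by positivity
      linarith
    set b := s + (J + 1 / Φ s + 1) with hbdef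
    have key := ico_mono (g := fun t => P t - (Φ t)⁻¹) (g' := fun t => ‖ψ t‖ ^ 2 - -(Φ' t) / Φ t ^ 2) hb 1
      (fun y hy => (hP y).sub ((hd y).inv (hposall y hy.1).ne')) (fun y hy => by
        have e1 := hposall y hy.1
        have e2 := hcs y
        have e3 := hq y (hs.le.trans hy.1)
        have e4 : 0 ≤ ‖ψ y‖ ^ 2 := by positivity
        set p := ‖ψ y‖ ^ 2
        have e5 : Φ y ^ 2 ≤ 2 * Φ' y * p := e2.trans (by gcongr)
        have e6 : 0 < Φ y ^ 2 := by positivity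
        have e7 : 0 ≤ Φ' y := by have : 0 ≤ ‖ψ1 y‖ ^ 2 := by positivity
                                 linarith
        have : (1 - p) * Φ y ^ 2 ≤ Φ' y := by
          rcases le_total 1 p with h | h
          · nlinarith
          · calc (1 - p) * Φ y ^ 2 ≤ (1 - p) * (2 * Φ' y * p) := by gcongr
              _ ≤ Φ' y := by nlinarith [sq_nonneg (2 * p - 1)]
        have h8 : 1 - p ≤ Φ' y / Φ y ^ 2 := by rw [le_div_iff₀ e6]; exact this
        rw [neg_div]; linarith)
    have h3 := hJ s b
    have h4 := hposall b hb
    have h5 : 0 < (Φ b)⁻¹ := by positivity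
    have h6 : (Φ s)⁻¹ = 1 / Φ s := by rw [one_div]
    linarith
  by_contra! hcon
  set s1 : ℝ := max S0 (max s0 (16 * K ^ 2)) with hs1
  have hX : ∀ s, HasDerivAt (fun s => Φ s * Real.exp (K * s ^ 2))
      (Φ' s * Real.exp (K * s ^ 2) + Φ s * (Real.exp (K * s ^ 2) * (K * (2 * s)))) s := by
    intro s
    have h3 : HasDerivAt (fun s : ℝ => K * s ^ 2) (K * (2 * s)) s := by
      simpa using (hasDerivAt_pow 2 s).const_mul K
    exact (hd s).mul h3.exp
  have hXl : ∀ s ≥ s1, ε / 2 ≤ Φ' s * Real.exp (K * s ^ 2) + Φ s * (Real.exp (K * s ^ 2) * (K * (2 * s))) := by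
    intro s hs
    have g1 : S0 ≤ s := (le_max_left _ _).trans hs
    have g2 : s0 ≤ s := (le_max_left _ _).trans ((le_max_right _ _).trans hs)
    have g3 : 16 * K ^ 2 ≤ s := (le_max_right _ _).trans ((le_max_right _ _).trans hs)
    have g4 := hcon s g1
    have g5 := hlow s g2
    have g6 := claim1 s g2
    have g7 := hcs s
    have hs0 : 0 < s := by linarith
    have hp : 0 ≤ ‖ψ s‖ ^ 2 := by positivity
    have hq0 : 0 ≤ ‖ψ1 s‖ ^ 2 := by positivity
    set D := ‖ψ1 s‖ ^ 2 + s ^ 3 * ‖ψ s‖ ^ 2 / 2 with hD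
    have hD0 : 0 ≤ D := by positivity
    have g8 : (4 * K * s * Φ s) ^ 2 ≤ D ^ 2 := by
      have : s ^ 3 * Φ s ^ 2 ≤ D ^ 2 := by
        calc s ^ 3 * Φ s ^ 2 ≤ s ^ 3 * (2 * ‖ψ1 s‖ ^ 2 * ‖ψ s‖ ^ 2) := by gcongr
          _ ≤ D ^ 2 := by rw [hD]; nlinarith [sq_nonneg (‖ψ1 s‖ ^ 2 - s ^ 3 * ‖ψ s‖ ^ 2 / 2)]
      calc (4 * K * s * Φ s) ^ 2 = (16 * K ^ 2) * (s ^ 2 * Φ s ^ 2) := by ring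
        _ ≤ s * (s ^ 2 * Φ s ^ 2) := by gcongr
        _ = s ^ 3 * Φ s ^ 2 := by ring
        _ ≤ D ^ 2 := this
    have g9 := abs_le_of_sq_le_sq' g8 hD0
    have hexp := Real.exp_pos (K * s ^ 2)
    have g10 : D / 2 ≤ Φ' s + Φ s * (K * (2 * s)) := by nlinarith [g9.1]
    calc ε / 2 ≤ D / 2 * Real.exp (K * s ^ 2) := by linarith
      _ ≤ (Φ' s + Φ s * (K * (2 * s))) * Real.exp (K * s ^ 2) := by gcongr
      _ = _ := by ring
  set X1 := Φ s1 * Real.exp (K * s1 ^ 2) with hX1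
  have hX10 : X1 ≤ 0 := mul_nonpos_of_nonpos_of_nonneg (claim1 s1 ((le_max_left _ _).trans (le_max_right _ _))) (Real.exp_pos _).le
  have hb : s1 ≤ s1 + (1 - X1) * (2 / ε) := by
    have : 0 ≤ (1 - X1) * (2 / ε) := mul_nonneg (by linarith) (by positivity)
    linarith
  have key := ico_mono hb (ε / 2) (fun y _ => hX y) (fun y hy => hXl y hy.1)
  have h3 : Φ (s1 + (1 - X1) * (2 / ε)) * Real.exp (K * (s1 + (1 - X1) * (2 / ε)) ^ 2) ≤ 0 :=
    mul_nonpos_of_nonpos_of_nonneg (claim1 _ (((le_max_left _ _).trans (le_max_right _ _)).trans hb)) (Real.exp_pos _).le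
  have h4 : ε / 2 * (s1 + (1 - X1) * (2 / ε) - s1) = 1 - X1 := by field_simp; ring
  rw [← hX1] at key
  linarith

/-- restriction of an entire solution to a real line `z0 + d t` -/
theorem ico_line {f f' : ℂ → ℂ} (hf : ∀ z, HasDerivAt f (f' z) z) (z0 d : ℂ) (t : ℝ) :
    HasDerivAt (fun t : ℝ => f (z0 + d * t)) (d * f' (z0 + d * t)) t := by
  have h1 : HasDerivAt (fun t : ℝ => z0 + d * (t:ℂ)) d t := by
    have := ((Complex.ofRealCLM.hasDerivAt (x := t)).const_mul d).const_add z0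
    simpa using this
  have := (hf (z0 + d * t)).comp t h1
  refine this.congr_deriv ?_
  ring

theorem ico_shift {lam : ℂ} {f f' : ℂ → ℂ} (hf : ∀ z, HasDerivAt f (f' z) z)
    (hf' : ∀ z, HasDerivAt f' ((z ^ 3 + lam) * f z) z)
    (hi : Integrable (fun s : ℝ => ‖f (Complex.I * s)‖ ^ 2)) (R : ℝ) (hR : 0 ≤ R) (ε : ℝ) (hε : 0 < ε) (S0 : ℝ) :
    ∃ s ≥ S0, ‖f' (R + Complex.I * s)‖ ^ 2 + s ^ 4 * ‖f (R + Complex.I * s)‖ ^ 2 < ε := by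
  have a1 : ∀ x : ℝ, HasDerivAt (fun s : ℝ => f (Complex.I * s)) (Complex.I * f' (Complex.I * x)) x := by
    intro x; simpa using ico_line hf 0 Complex.I x
  have a2 : ∀ x : ℝ, HasDerivAt (fun s : ℝ => Complex.I * f' (Complex.I * s))
      ((Complex.I * (x:ℂ) ^ 3 - lam) * f (Complex.I * x)) x := by
    intro x
    have := (ico_line hf' 0 Complex.I x).const_mul Complex.I
    simp only [zero_add] at this
    refine this.congr_deriv ?_
    have e : Complex.I ^ 2 = -1 := Complex.I_sq
    linear_combination (Complex.I ^ 3 * x ^ 3 - Complex.I * x ^ 3 + lam) * f (Complex.I * x) * e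
  obtain ⟨s, hs, hlt⟩ := ico_decay a1 a2 hi (2 * R + 1) (by linarith) ε hε (max S0 (max R (max ‖lam‖ 9)))
  refine ⟨s, (le_max_left _ _).trans hs, ?_⟩
  have g1 : R ≤ s := (le_max_left _ _).trans ((le_max_right _ _).trans hs)
  have g2 : ‖lam‖ ≤ s := (le_max_left _ _).trans ((le_max_right _ _).trans ((le_max_right _ _).trans hs))
  have g3 : 9 ≤ s := (le_max_right _ _).trans ((le_max_right _ _).trans ((le_max_right _ _).trans hs))
  have hpot : ∀ x ∈ Set.Icc 0 R, ‖((x:ℂ) + Complex.I * s) ^ 3 + lam‖ ≤ s ^ 4 := by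
    intro x hx
    have h1 : ‖(x:ℂ) + Complex.I * s‖ ≤ 2 * s := by
      refine (norm_add_le _ _).trans ?_
      rw [norm_mul, Complex.norm_I, Complex.norm_real, Complex.norm_real, Real.norm_eq_abs, Real.norm_eq_abs,
        abs_of_nonneg hx.1, abs_of_nonneg (by linarith : (0:ℝ) ≤ s)]
      linarith [hx.2]
    refine (norm_add_le _ _).trans ?_
    rw [norm_pow]
    have h2 : ‖(x:ℂ) + Complex.I * s‖ ^ 3 ≤ (2 * s) ^ 3 := by gcongr
    have h3 : s ≤ s ^ 3 := by nlinarith [mul_nonneg (by linarith : (0:ℝ) ≤ s) (by nlinarith : (0:ℝ) ≤ s^2 - 1)]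
    have h4 : 9 * s ^ 3 ≤ s * s ^ 3 := by gcongr
    nlinarith
  set n : ℝ → ℝ := fun x => ‖f' (x + Complex.I * s)‖ ^ 2 + s ^ 4 * ‖f (x + Complex.I * s)‖ ^ 2 with hn
  have hgron : ‖f' (R + Complex.I * s)‖ ^ 2 + s ^ 4 * ‖f (R + Complex.I * s)‖ ^ 2 ≤
      (‖f' (Complex.I * s)‖ ^ 2 + s ^ 4 * ‖f (Complex.I * s)‖ ^ 2) * Real.exp (2 * s ^ 2 * R) := by
    have d1 : ∀ x : ℝ, HasDerivAt (fun x : ℝ => f (x + Complex.I * s)) (f' (x + Complex.I * s)) x := by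
      intro x
      have := ico_line hf (Complex.I * s) 1 x
      simpa [add_comm] using this
    have d2 : ∀ x : ℝ, HasDerivAt (fun x : ℝ => f' (x + Complex.I * s)) (((x + Complex.I * s) ^ 3 + lam) * f (x + Complex.I * s)) x := by
      intro x
      have := ico_line hf' (Complex.I * s) 1 x
      simpa [add_comm] using this
    have hdn : ∀ x : ℝ, HasDerivAt n (deriv n x) x := fun x =>
      ((ico_normsq_deriv (d2 x)).add ((ico_normsq_deriv (d1 x)).const_mul (s ^ 4))).differentiableAt.hasDerivAt
    have hinner : ∀ a b : ℂ, a.re * b.re + a.im * b.im ≤ ‖a‖ * ‖b‖ := by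
      intro a b
      have h1 : (a * starRingEnd ℂ b).re = a.re * b.re + a.im * b.im := by simp
      rw [← h1]
      refine (Complex.re_le_norm _).trans ?_
      rw [norm_mul, Complex.norm_conj]
    have hbound : ∀ x ∈ Set.Icc 0 R, deriv n x ≤ 2 * s ^ 2 * n x := by
      intro x hx
      have hder : HasDerivAt n _ x := (ico_normsq_deriv (d2 x)).add ((ico_normsq_deriv (d1 x)).const_mul (s ^ 4))
      rw [hder.deriv]
      have i1 := hinner (f' (x + Complex.I * s)) (((x + Complex.I * s) ^ 3 + lam) * f (x + Complex.I * s))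
      have i2 := hinner (f (x + Complex.I * s)) (f' (x + Complex.I * s))
      rw [norm_mul] at i1
      have i3 : ‖f' (x + Complex.I * s)‖ * (‖((x:ℂ) + Complex.I * s) ^ 3 + lam‖ * ‖f (x + Complex.I * s)‖) ≤
         ‖f' (x + Complex.I * s)‖ * (s ^ 4 * ‖f (x + Complex.I * s)‖) := by
        gcongr; exact hpot x hx
      have i4 : s ^ 4 * ((f (x + Complex.I * s)).re * (f' (x + Complex.I * s)).re + (f (x + Complex.I * s)).im * (f' (x + Complex.I * s)).im) ≤ s ^ 4 * (‖f (x + Complex.I * s)‖ * ‖f' (x + Complex.I * s)‖) := by gcongr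
      simp only [hn]
      nlinarith [mul_nonneg (sq_nonneg s) (sq_nonneg (‖f' (x + Complex.I * s)‖ - s ^ 2 * ‖f (x + Complex.I * s)‖))]
    have hex : ∀ x : ℝ, HasDerivAt (fun x => Real.exp (-(2 * s ^ 2 * x))) (Real.exp (-(2 * s ^ 2 * x)) * (-(2 * s ^ 2))) x := by
      intro x
      have h := (((hasDerivAt_id x).const_mul (2 * s ^ 2)).neg.exp)
      simpa using h
    have key := ico_mono (g := fun x => - (n x * Real.exp (-(2 * s ^ 2 * x)))) hR 0
      (fun x _ => ((hdn x).mul (hex x)).neg) (fun x hx => by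
        have := hbound x hx
        have he := Real.exp_pos (-(2 * s ^ 2 * x))
        nlinarith)
    simp only [mul_zero, neg_zero, Real.exp_zero, mul_one] at key
    have e1 : n R * Real.exp (-(2 * s ^ 2 * R)) ≤ n 0 := by linarith
    rw [Real.exp_neg, ← div_eq_mul_inv, div_le_iff₀ (Real.exp_pos _)] at e1
    simpa [hn] using e1
  refine lt_of_le_of_lt hgron (lt_of_le_of_lt ?_ hlt)
  have e1 : Real.exp ((2 * R + 1) * s ^ 2) = Real.exp (s ^ 2) * Real.exp (2 * s ^ 2 * R) := by
    rw [← Real.exp_add]; ring_nf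
  rw [e1, ← mul_assoc]
  have e2 : 2 * s ≤ Real.exp (s ^ 2) := by
    have := Real.add_one_le_exp (s ^ 2)
    nlinarith [sq_nonneg (s - 1)]
  have e3 : ‖Complex.I * f' (Complex.I * s)‖ = ‖f' (Complex.I * s)‖ := by
    rw [norm_mul, Complex.norm_I, one_mul]
  rw [e3]
  gcongr
  have hs0 : 0 ≤ s := by linarith
  calc ‖f' (Complex.I * s)‖ ^ 2 + s ^ 4 * ‖f (Complex.I * s)‖ ^ 2
      ≤ (‖f' (Complex.I * s)‖ ^ 2 + s ^ 3 * ‖f (Complex.I * s)‖ ^ 2 / 2) * (2 * s) := by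
        nlinarith [sq_nonneg ‖f' (Complex.I * s)‖]
    _ ≤ _ := by gcongr

noncomputable def icoR (z : ℂ) : ℂ := Complex.exp (Complex.log z / 4)

noncomputable def icoS (z : ℂ) : ℂ := 2 / 5 * icoR z ^ 10

noncomputable def icoH (f : ℂ → ℂ) (z : ℂ) : ℂ := f z * icoR z ^ 3 * Complex.exp (-icoS z)

noncomputable def icoK (f f' : ℂ → ℂ) (z : ℂ) : ℂ :=
  1 / 2 * (icoR z ^ 3)⁻¹ * Complex.exp (-icoS z) * (f' z - (icoR z ^ 6 - 3 / 4 * (icoR z ^ 4)⁻¹) * f z)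

theorem icoR_ne (z : ℂ) : icoR z ≠ 0 := Complex.exp_ne_zero _

theorem icoR_pow {z : ℂ} (hz : z ≠ 0) : icoR z ^ 4 = z := by
  rw [icoR, ← Complex.exp_nat_mul]
  rw [show ((4:ℕ):ℂ) * (Complex.log z / 4) = Complex.log z by push_cast; ring, Complex.exp_log hz]

theorem icoR_deriv {z : ℂ} (hz : z ∈ Complex.slitPlane) : HasDerivAt icoR (1 / (4 * icoR z ^ 3)) z := by
  have h := ((Complex.hasDerivAt_log hz).div_const 4).cexp
  refine h.congr_deriv ?_
  have h4 := icoR_pow (Complex.slitPlane_ne_zero hz)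
  have h0 := icoR_ne z
  change icoR z * (z⁻¹ / 4) = _
  nth_rewrite 2 [← h4]
  field_simp

theorem icoS_deriv {z : ℂ} (hz : z ∈ Complex.slitPlane) : HasDerivAt icoS (icoR z ^ 6) z := by
  refine (((icoR_deriv hz).pow 10).const_mul (2 / 5)).congr_deriv ?_
  have h0 := icoR_ne z
  field_simp
  norm_num

theorem icoH_deriv {f f' : ℂ → ℂ} {z : ℂ} (hz : z ∈ Complex.slitPlane) (hf : HasDerivAt f (f' z) z) :
    HasDerivAt (icoH f) (2 * icoR z ^ 6 * icoK f f' z) z := by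
  refine ((hf.mul ((icoR_deriv hz).pow 3)).mul (icoS_deriv hz).neg.cexp).congr_deriv ?_
  have h0 := icoR_ne z
  simp only [icoK, Pi.mul_apply, Pi.pow_apply, Pi.neg_apply]
  field_simp
  push_cast
  ring

theorem icoK_deriv {lam : ℂ} {f f' : ℂ → ℂ} {z : ℂ} (hz : z ∈ Complex.slitPlane) (hf : HasDerivAt f (f' z) z)
    (hf' : HasDerivAt f' ((z ^ 3 + lam) * f z) z) :
    HasDerivAt (icoK f f') (-(2 * icoR z ^ 6 * icoK f f' z) +
      1 / 2 * (lam - 21 / 16 * (icoR z ^ 8)⁻¹) * (icoR z ^ 6)⁻¹ * icoH f z) z := by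
  have h0 := icoR_ne z
  have h4 := icoR_pow (Complex.slitPlane_ne_zero hz)
  have hr := icoR_deriv hz
  have a1 : HasDerivAt (fun z => (icoR z ^ 3)⁻¹) _ z := (hr.pow 3).inv (pow_ne_zero _ h0)
  have a2 : HasDerivAt (fun z => (icoR z ^ 4)⁻¹) _ z := (hr.pow 4).inv (pow_ne_zero _ h0)
  have a3 : HasDerivAt (fun z => Complex.exp (-icoS z)) _ z := (icoS_deriv hz).neg.cexp
  have a4 : HasDerivAt (fun z => icoR z ^ 6) _ z := hr.pow 6
  have a5 : HasDerivAt (fun z => 1 / 2 * (icoR z ^ 3)⁻¹ * Complex.exp (-icoS z)) _ z := (a1.const_mul (1/2)).mul a3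
  have a6 : HasDerivAt (fun z => icoR z ^ 6 - 3 / 4 * (icoR z ^ 4)⁻¹) _ z := a4.sub (a2.const_mul (3/4))
  have a7 : HasDerivAt (fun z => f' z - (icoR z ^ 6 - 3 / 4 * (icoR z ^ 4)⁻¹) * f z) _ z := hf'.sub (a6.mul hf)
  refine (a5.mul a7).congr_deriv ?_
  simp only [icoK, icoH, Pi.neg_apply, Pi.pow_apply]
  rw [show (z ^ 3 : ℂ) = icoR z ^ 12 by rw [show icoR z ^ 12 = (icoR z ^ 4) ^ 3 by ring, h4]]
  generalize icoR z = r at *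
  field_simp
  push_cast
  ring

theorem icoR_norm {z : ℂ} (hz : z ≠ 0) : ‖icoR z‖ ^ 4 = ‖z‖ := by
  rw [← norm_pow, icoR_pow hz]

theorem icoR_six_im {z : ℂ} (hre : 0 ≤ z.re) (him : 0 ≤ z.im) : 0 ≤ (icoR z ^ 6).im := by
  rw [icoR, ← Complex.exp_nat_mul, Complex.exp_im]
  have h1 : 0 ≤ z.arg := Complex.arg_nonneg_iff.2 him
  have h2 : z.arg ≤ Real.pi / 2 := Complex.arg_le_pi_div_two_iff.2 (Or.inl hre)
  have e : (((6:ℕ):ℂ) * (Complex.log z / 4)).im = 3 / 2 * z.arg := by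
    rw [show ((6:ℕ):ℂ) * (Complex.log z / 4) = ((3 / 2 : ℝ) : ℂ) * Complex.log z by push_cast; ring,
      Complex.im_ofReal_mul, Complex.log_im]
  rw [e]
  refine mul_nonneg (Real.exp_pos _).le (Real.sin_nonneg_of_nonneg_of_le_pi (by linarith) ?_)
  have := Real.pi_pos
  linarith

theorem ico_lg {lam : ℂ} {f f' : ℂ → ℂ} (hf : ∀ z, HasDerivAt f (f' z) z)
    (hf' : ∀ z, HasDerivAt f' ((z ^ 3 + lam) * f z) z)
    (hi : Integrable (fun s : ℝ => ‖f (Complex.I * s)‖ ^ 2)) (R : ℝ) (hR : 1 ≤ R)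
    (ε : ℝ) (hε : 8 * (‖lam‖ + 2) / √R ≤ ε) (hε8 : ε ≤ 1 / 8) (s : ℝ) (hs : 0 ≤ s) :
    ‖icoH f (R + Complex.I * s) - icoH f R‖ ≤ 24 * ε * ‖icoH f R‖ ∧
    ‖icoK f f' (R + Complex.I * s)‖ ≤ 8 * ε * ‖icoH f R‖ := by
  set Z : ℝ → ℂ := fun s => R + Complex.I * s with hZ
  have hre : ∀ s, (Z s).re = R := fun s => by simp [hZ]
  have him : ∀ s, (Z s).im = s := fun s => by simp [hZ]
  have hslit : ∀ s, Z s ∈ Complex.slitPlane := fun s => Or.inl (by rw [hre]; linarith)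
  have hZ0 : ∀ s, Z s ≠ 0 := fun s => Complex.slitPlane_ne_zero (hslit s)
  have hZn : ∀ s, ‖Z s‖ ^ 2 = R ^ 2 + s ^ 2 := fun s => by
    rw [Complex.sq_norm, Complex.normSq_apply, hre, him]; ring
  have hZd : ∀ s, HasDerivAt Z Complex.I s := fun s => by
    have := ico_line (f := fun z => z) (f' := fun _ => 1) (fun z => hasDerivAt_id z) R Complex.I s
    rwa [mul_one] at this
  have hcomp : ∀ {g : ℂ → ℂ} {g' : ℂ} (s : ℝ), HasDerivAt g g' (Z s) → HasDerivAt (fun s => g (Z s)) (g' * Complex.I) s :=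
    fun s h => h.comp s (hZd s)
  have hr1 : ∀ s, 1 ≤ ‖icoR (Z s)‖ := by
    intro s
    have h1 : 1 ≤ ‖Z s‖ := by
      have := hZn s
      nlinarith [norm_nonneg (Z s), sq_nonneg s]
    rw [← icoR_norm (hZ0 s)] at h1
    by_contra! hc
    have := pow_lt_one₀ (norm_nonneg (icoR (Z s))) hc (n := 4) (by norm_num)
    linarith
  set E : ℝ → ℂ := fun s => Complex.exp (2 * icoS (Z s)) with hE
  set A : ℝ → ℂ := fun s => icoH f (Z s) + icoK f f' (Z s) with hA
  set q : ℝ → ℂ := fun s => E s * icoK f f' (Z s) with hq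
  set v : ℝ → ℂ := fun s => Complex.I * (1 / 2 * (lam - 21 / 16 * (icoR (Z s) ^ 8)⁻¹) * (icoR (Z s) ^ 6)⁻¹) with hv
  have hE0 : ∀ s, E s ≠ 0 := fun s => Complex.exp_ne_zero _
  have hqE : ∀ s, q s / E s = icoK f f' (Z s) := fun s => by
    simp only [hq]; rw [mul_div_cancel_left₀ _ (hE0 s)]
  have hAq : ∀ s, A s - q s / E s = icoH f (Z s) := fun s => by rw [hqE]; simp [hA]
  have hEd : ∀ s, HasDerivAt E (E s * (2 * icoR (Z s) ^ 6 * Complex.I)) s := by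
    intro s
    have := ((hcomp s (icoS_deriv (hslit s))).const_mul 2).cexp
    refine this.congr_deriv ?_
    simp only [hE]; ring
  have hSd : ∀ s, HasDerivAt (fun s => (icoS (Z s)).re) (-(icoR (Z s) ^ 6).im) s := by
    intro s
    have := (ico_re_deriv (hcomp s (icoS_deriv (hslit s)))).1
    refine this.congr_deriv ?_
    simp
  have hSa : ∀ s t, 0 ≤ s → s ≤ t → (icoS (Z t)).re ≤ (icoS (Z s)).re := by
    intro s t hs hst
    have := ico_mono hst 0 (fun x _ => (hSd x).neg) (fun x hx => by
      rw [neg_neg]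
      exact icoR_six_im (by rw [hre]; linarith) (by rw [him]; linarith [hx.1]))
    simp only [Pi.neg_apply] at this
    linarith
  have hEn : ∀ s, ‖E s‖ = Real.exp (2 * (icoS (Z s)).re) := by
    intro s
    simp only [hE, Complex.norm_exp]
    congr 1
    simp
  have hHd := fun s => hcomp s (icoH_deriv (hslit s) (hf (Z s)))
  have hKd := fun s => hcomp s (icoK_deriv (hslit s) (hf (Z s)) (hf' (Z s)))
  have hR0 : 0 < √R := Real.sqrt_pos.2 (by linarith)
  have hl := norm_nonneg lam
  set C : ℝ := 8 * (‖lam‖ + 2) with hC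
  have hsq : ∀ s, 0 ≤ s → HasDerivAt (fun s => -C * (√(R + s))⁻¹) (C / (2 * √(R + s) ^ 3)) s := by
    intro s hs
    have h0 : 0 < R + s := by linarith
    have h1 : HasDerivAt (fun s => R + s) 1 s := (hasDerivAt_id s).const_add R
    have h2 : HasDerivAt (fun s => (√(R + s))⁻¹) _ s := (h1.sqrt h0.ne').inv (Real.sqrt_pos.2 h0).ne'
    refine (h2.const_mul (-C)).congr_deriv ?_
    have := Real.sqrt_pos.2 h0
    field_simp
  have main := ico_volterra (A := A) (q := q) (v := v) (E := E) (B := fun s => -C * (√(R + s))⁻¹)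
    (B' := fun s => C / (2 * √(R + s) ^ 3)) (ε := ε) (le_trans (by positivity) hε) hε8 (fun s _ => hE0 s)
    (fun s _ => (hEd s).continuousAt)
    (fun s t hs hst => by rw [hEn, hEn]; exact Real.exp_le_exp.2 (by linarith [hSa s t hs hst]))
    (fun s _ => by
      rw [hAq]
      refine ((hHd s).add (hKd s)).congr_deriv ?_
      simp only [hv]; ring)
    (fun s _ => by
      rw [hAq]
      refine ((hEd s).mul (hKd s)).congr_deriv ?_
      simp only [hv]; ring)
    hsq ?_ ?_ ?_ s hs
  · rw [hAq, hAq, hqE] at main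
    simpa [hZ] using main
  · intro s hs
    have h0 : 0 < R + s := by linarith
    have hy := Real.sqrt_pos.2 h0
    have hy2 := Real.sq_sqrt h0.le
    set y := √(R + s)
    have h1 := hr1 s
    have h4 := icoR_norm (hZ0 s)
    set ρ := ‖icoR (Z s)‖ with hρ
    have h2 : (y ^ 2 / 4) ^ 2 ≤ (ρ ^ 4) ^ 2 := by
      rw [h4, hZn, hy2]; nlinarith [sq_nonneg (R - s)]
    have h3 : y ^ 2 / 4 ≤ ρ ^ 4 := by
      exact (pow_le_pow_iff_left₀ (by positivity) (by positivity) (by norm_num)).1 h2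
    have h5 : y / 2 ≤ ρ ^ 2 := by
      have : (y / 2) ^ 2 ≤ (ρ ^ 2) ^ 2 := by nlinarith
      exact (pow_le_pow_iff_left₀ (by positivity) (by positivity) (by norm_num)).1 this
    have h6 : y ^ 3 / 8 ≤ ρ ^ 6 := by
      calc y ^ 3 / 8 = (y / 2) ^ 3 := by ring
        _ ≤ (ρ ^ 2) ^ 3 := by gcongr
        _ = ρ ^ 6 := by ring
    have h7 : ‖lam - 21 / 16 * (icoR (Z s) ^ 8)⁻¹‖ ≤ ‖lam‖ + 2 := by
      refine (norm_sub_le _ _).trans ?_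
      rw [norm_mul, norm_inv, norm_pow, ← hρ]
      have h8 : (ρ ^ 8)⁻¹ ≤ 1 := inv_le_one_of_one_le₀ (one_le_pow₀ h1)
      have h9 : ‖(21 / 16 : ℂ)‖ = 21 / 16 := by norm_num
      rw [h9]
      linarith
    simp only [hv, norm_mul, Complex.norm_I, one_mul, norm_inv, norm_pow]
    rw [← hρ, show ‖(1 / 2 : ℂ)‖ = 1 / 2 by norm_num]
    calc 1 / 2 * ‖lam - 21 / 16 * (icoR (Z s) ^ 8)⁻¹‖ * (ρ ^ 6)⁻¹ ≤ 1 / 2 * (‖lam‖ + 2) * (y ^ 3 / 8)⁻¹ := by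
          gcongr
      _ = C / (2 * y ^ 3) := by rw [hC]; field_simp; try ring
  · intro s t hs hst
    have e1 : (√(R + s))⁻¹ ≤ (√R)⁻¹ := by
      gcongr; linarith
    have e2 : 0 ≤ (√(R + t))⁻¹ := by positivity
    have e3 : C * (√(R + s))⁻¹ ≤ C * (√R)⁻¹ := by gcongr
    have e4 : 0 ≤ C * (√(R + t))⁻¹ := by positivity
    rw [div_eq_mul_inv] at hε
    linarith
  · intro δ hδ S
    set M := Real.exp (icoS (Z 0)).re with hM
    have hM0 : 0 < M := Real.exp_pos _
    obtain ⟨s, hs, hlt⟩ := ico_shift hf hf' hi R (by linarith) ((δ / (9 * M)) ^ 2) (by positivity) (max S R)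
    refine ⟨s, (le_max_left _ _).trans hs, ?_⟩
    have hsR : R ≤ s := (le_max_right _ _).trans hs
    have hZs : Z s = R + Complex.I * s := rfl
    rw [← hZs] at hlt
    set m := δ / (9 * M) with hm
    have hm0 : 0 < m := by positivity
    have b1 : ‖f' (Z s)‖ < m := by
      refine lt_of_pow_lt_pow_left₀ 2 hm0.le (lt_of_le_of_lt ?_ hlt)
      have : 0 ≤ s ^ 4 * ‖f (Z s)‖ ^ 2 := by positivity
      linarith
    have b2 : s ^ 2 * ‖f (Z s)‖ < m := by
      refine lt_of_pow_lt_pow_left₀ 2 hm0.le (lt_of_le_of_lt ?_ hlt)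
      have : 0 ≤ ‖f' (Z s)‖ ^ 2 := by positivity
      linarith [show (s ^ 2 * ‖f (Z s)‖) ^ 2 = s ^ 4 * ‖f (Z s)‖ ^ 2 by ring]
    have h1 := hr1 s
    have h4 := icoR_norm (hZ0 s)
    have hq' : q s = 1 / 2 * (icoR (Z s) ^ 3)⁻¹ * Complex.exp (icoS (Z s)) *
        (f' (Z s) - (icoR (Z s) ^ 6 - 3 / 4 * (icoR (Z s) ^ 4)⁻¹) * f (Z s)) := by
      simp only [hq, hE, icoK]
      rw [show Complex.exp (icoS (Z s)) = Complex.exp (2 * icoS (Z s)) * Complex.exp (-icoS (Z s)) by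
        rw [← Complex.exp_add]; congr 1; ring]
      ring
    rw [hq']
    set ρ := ‖icoR (Z s)‖ with hρ
    have c1 : ‖Complex.exp (icoS (Z s))‖ ≤ M := by
      rw [Complex.norm_exp]
      exact Real.exp_le_exp.2 (hSa 0 s le_rfl (by linarith))
    have c2 : (ρ ^ 3)⁻¹ ≤ 1 := inv_le_one_of_one_le₀ (one_le_pow₀ h1)
    have c2' : (ρ ^ 4)⁻¹ ≤ 1 := inv_le_one_of_one_le₀ (one_le_pow₀ h1)
    have c3 : ρ ^ 6 ≤ 2 * s ^ 2 := by
      calc ρ ^ 6 ≤ ρ ^ 8 := pow_le_pow_right₀ h1 (by norm_num)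
        _ = (ρ ^ 4) ^ 2 := by ring
        _ = R ^ 2 + s ^ 2 := by rw [h4, hZn]
        _ ≤ 2 * s ^ 2 := by nlinarith
    have c4 : ‖icoR (Z s) ^ 6 - 3 / 4 * (icoR (Z s) ^ 4)⁻¹‖ ≤ 3 * s ^ 2 := by
      refine (norm_sub_le _ _).trans ?_
      rw [norm_mul, norm_inv, norm_pow, norm_pow, ← hρ, show ‖(3 / 4 : ℂ)‖ = 3 / 4 by norm_num]
      nlinarith
    have c5 : ‖f' (Z s) - (icoR (Z s) ^ 6 - 3 / 4 * (icoR (Z s) ^ 4)⁻¹) * f (Z s)‖ ≤ 4 * m := by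
      refine (norm_sub_le _ _).trans ?_
      rw [norm_mul]
      have := mul_le_mul_of_nonneg_right c4 (norm_nonneg (f (Z s)))
      nlinarith
    rw [norm_mul, norm_mul, norm_mul, norm_inv, norm_pow, ← hρ, show ‖(1 / 2 : ℂ)‖ = 1 / 2 by norm_num]
    calc 1 / 2 * (ρ ^ 3)⁻¹ * ‖Complex.exp (icoS (Z s))‖ * ‖f' (Z s) - (icoR (Z s) ^ 6 - 3 / 4 * (icoR (Z s) ^ 4)⁻¹) * f (Z s)‖
        ≤ 1 / 2 * 1 * M * (4 * m) := by gcongr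
      _ < δ := by
        have : m * (9 * M) = δ := by rw [hm]; field_simp
        nlinarith [mul_pos hm0 hM0]

theorem ico_growth {lam : ℂ} {f f' : ℂ → ℂ} (hf : ∀ z, HasDerivAt f (f' z) z)
    (hf' : ∀ z, HasDerivAt f' ((z ^ 3 + lam) * f z) z) :
    ∃ C : ℝ, 0 ≤ C ∧ ∃ T : ℝ, 1 ≤ T ∧ ∀ R : ℝ, T ≤ R → ‖f R‖ ≤ C * Real.exp (4 / 5 * (R ^ 2 * √R)) := by
  set T : ℝ := (2 + ‖lam‖) ^ 2 with hT
  have hl := norm_nonneg lam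
  have hT1 : 1 ≤ T := by rw [hT]; nlinarith
  have d1 : ∀ x : ℝ, HasDerivAt (fun x : ℝ => f x) (f' x) x := by
    intro x
    have := ico_line hf 0 1 x
    simpa using this
  have d2 : ∀ x : ℝ, HasDerivAt (fun x : ℝ => f' x) ((x ^ 3 + lam) * f x) x := by
    intro x
    have := ico_line hf' 0 1 x
    simpa using this
  have hinner : ∀ a b : ℂ, a.re * b.re + a.im * b.im ≤ ‖a‖ * ‖b‖ := by
    intro a b
    have h1 : (a * starRingEnd ℂ b).re = a.re * b.re + a.im * b.im := by simp
    rw [← h1]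
    refine (Complex.re_le_norm _).trans ?_
    rw [norm_mul, Complex.norm_conj]
  set n : ℝ → ℝ := fun x => ‖f' x‖ ^ 2 + x ^ 3 * ‖f x‖ ^ 2 with hn
  have hdn : ∀ x : ℝ, HasDerivAt n (2 * ((f' x).re * ((x ^ 3 + lam) * f x).re + (f' x).im * ((x ^ 3 + lam) * f x).im) +
      (3 * x ^ 2 * ‖f x‖ ^ 2 + x ^ 3 * (2 * ((f x).re * (f' x).re + (f x).im * (f' x).im)))) x := by
    intro x
    have h3 : HasDerivAt (fun x : ℝ => x ^ 3) (3 * x ^ 2) x := by simpa using hasDerivAt_pow 3 x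
    exact (ico_normsq_deriv (d2 x)).add (h3.mul (ico_normsq_deriv (d1 x)))
  have hn0 : ∀ x, T ≤ x → 0 ≤ n x := fun x hx => by
    have : 0 ≤ x := by linarith
    simp only [hn]; positivity
  have hbound : ∀ x, T ≤ x → 2 * ((f' x).re * ((x ^ 3 + lam) * f x).re + (f' x).im * ((x ^ 3 + lam) * f x).im) +
      (3 * x ^ 2 * ‖f x‖ ^ 2 + x ^ 3 * (2 * ((f x).re * (f' x).re + (f x).im * (f' x).im))) ≤ 4 * (x * √x) * n x := by
    intro x hx
    have hx0 : 0 ≤ x := by linarith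
    have i1 := hinner (f' x) ((x ^ 3 + lam) * f x)
    have i2 := hinner (f x) (f' x)
    have hy : 2 + ‖lam‖ ≤ √x := Real.le_sqrt_of_sq_le hx
    have hy2 := Real.sq_sqrt hx0
    set y := √x
    have i3 : ‖((x:ℂ) ^ 3 + lam) * f x‖ ≤ (y ^ 6 + ‖lam‖) * ‖f x‖ := by
      rw [norm_mul]
      gcongr
      refine (norm_add_le _ _).trans ?_
      rw [norm_pow, Complex.norm_real, Real.norm_eq_abs, abs_of_nonneg hx0, ← hy2]
      rw [show (y ^ 2) ^ 3 = y ^ 6 by ring]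
    have hxn : n x = ‖f' x‖ ^ 2 + y ^ 6 * ‖f x‖ ^ 2 := by
      simp only [hn]; rw [← hy2]; ring
    have e3 : x ^ 3 = y ^ 6 := by rw [← hy2]; ring
    have e2 : x ^ 2 = y ^ 4 := by rw [← hy2]; ring
    have e1 : x * y = y ^ 3 := by rw [← hy2]; ring
    have i4 := i1.trans (mul_le_mul_of_nonneg_left i3 (norm_nonneg (f' x)))
    rw [e2, e1]
    rw [show (x:ℝ) ^ 3 = y ^ 6 from e3]
    have i5 : y ^ 6 * ((f x).re * (f' x).re + (f x).im * (f' x).im) ≤ y ^ 6 * (‖f x‖ * ‖f' x‖) := by gcongr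
    rw [hxn]
    have ha := norm_nonneg (f' x)
    have hb := norm_nonneg (f x)
    set a := ‖f' x‖
    set b := ‖f x‖
    have hy0 : 2 ≤ y := by linarith
    have hN : 2 * (y ^ 3 * (a * b)) ≤ a ^ 2 + y ^ 6 * b ^ 2 := by nlinarith [sq_nonneg (a - y ^ 3 * b)]
    have hy1 : y ≤ y ^ 3 := by nlinarith [mul_nonneg (by linarith : (0:ℝ) ≤ y) (by nlinarith : (0:ℝ) ≤ y^2 - 1)]
    have hab : 0 ≤ a * b := by positivity
    have j1 : 2 * (‖lam‖ * (a * b)) ≤ a ^ 2 + y ^ 6 * b ^ 2 := by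
      have : ‖lam‖ * (a * b) ≤ y ^ 3 * (a * b) := by gcongr; linarith
      linarith
    have j2 : 3 * y ^ 4 * b ^ 2 ≤ a ^ 2 + y ^ 6 * b ^ 2 := by
      have : 3 * y ^ 4 * b ^ 2 ≤ y ^ 2 * y ^ 4 * b ^ 2 := by gcongr; nlinarith
      nlinarith
    have j3 : y ^ 3 * (2 * (y ^ 3 * (a * b))) ≤ y ^ 3 * (a ^ 2 + y ^ 6 * b ^ 2) := by gcongr
    have j4 : 2 * (a ^ 2 + y ^ 6 * b ^ 2) ≤ 2 * y ^ 3 * (a ^ 2 + y ^ 6 * b ^ 2) := by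
      gcongr; linarith
    nlinarith
  have hE : ∀ x : ℝ, T ≤ x → HasDerivAt (fun x : ℝ => -(8 / 5 * (x ^ 2 * √x))) (-(4 * (x * √x))) x := by
    intro x hx
    have hx0 : 0 < x := by linarith
    have h2 : HasDerivAt (fun x : ℝ => x ^ 2) (2 * x) x := by simpa using hasDerivAt_pow 2 x
    have h3 := ((h2.mul (Real.hasDerivAt_sqrt hx0.ne')).const_mul (8 / 5)).neg
    refine h3.congr_deriv ?_
    have hy := Real.sqrt_pos.2 hx0
    have hy2 := Real.sq_sqrt hx0.le
    set y := √x
    rw [← hy2]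
    field_simp
    ring
  refine ⟨√(n T * Real.exp (-(8 / 5 * (T ^ 2 * √T)))), Real.sqrt_nonneg _, T, hT1, fun R hR => ?_⟩
  have key := ico_mono (g := fun x => - (n x * Real.exp (-(8 / 5 * (x ^ 2 * √x))))) hR 0
      (fun x hx => ((hdn x).mul (hE x hx.1).exp).neg) (fun x hx => by
        have := hbound x hx.1
        have he := Real.exp_pos (-(8 / 5 * (x ^ 2 * √x)))
        nlinarith)
  have e1 : n R * Real.exp (-(8 / 5 * (R ^ 2 * √R))) ≤ n T * Real.exp (-(8 / 5 * (T ^ 2 * √T))) := by linarith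
  rw [Real.exp_neg (8 / 5 * (R ^ 2 * √R)), ← div_eq_mul_inv, div_le_iff₀ (Real.exp_pos _)] at e1
  have hR1 : 1 ≤ R := hT1.trans hR
  have e2 : ‖f R‖ ^ 2 ≤ n R := by
    have h1 : 1 ≤ R ^ 3 := one_le_pow₀ hR1
    simp only [hn]
    nlinarith [sq_nonneg ‖f' R‖, sq_nonneg ‖f R‖]
  have hnT := hn0 T le_rfl
  have hexp : Real.exp (8 / 5 * (R ^ 2 * √R)) = Real.exp (4 / 5 * (R ^ 2 * √R)) ^ 2 := by
    rw [← Real.exp_nat_mul]; congr 1; push_cast; ring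
  rw [hexp] at e1
  refine (pow_le_pow_iff_left₀ (norm_nonneg _) (by positivity) (by norm_num : (2:ℕ) ≠ 0)).1 ?_
  rw [mul_pow, Real.sq_sqrt (by positivity)]
  exact e2.trans e1

noncomputable def icoW : ℂ := Complex.exp ((2 * Real.pi / 5 : ℝ) * Complex.I)

theorem icoW_eq : icoW = Real.cos (2 * Real.pi / 5) + Complex.I * Real.sin (2 * Real.pi / 5) := by
  rw [icoW, Complex.exp_mul_I, ← Complex.ofReal_cos, ← Complex.ofReal_sin]; ring

theorem icoW_cos : 0 < Real.cos (2 * Real.pi / 5) ∧ Real.cos (2 * Real.pi / 5) ≤ 1 / 2 := by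
  have hp := Real.pi_pos
  constructor
  · apply Real.cos_pos_of_mem_Ioo
    constructor <;> linarith
  · rw [← Real.cos_pi_div_three]
    apply Real.cos_le_cos_of_nonneg_of_le_pi <;> linarith

theorem icoW_log (t : ℝ) (ht : 0 < t) : Complex.log (icoW * t) = Real.log t + (2 * Real.pi / 5 : ℝ) * Complex.I := by
  have hp := Real.pi_pos
  rw [mul_comm, icoW, Complex.log_ofReal_mul ht (Complex.exp_ne_zero _), Complex.log_exp]
  · simp only [Complex.mul_im, Complex.ofReal_re, Complex.I_im, Complex.ofReal_im, Complex.I_re]; linarith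
  · simp only [Complex.mul_im, Complex.ofReal_re, Complex.I_im, Complex.ofReal_im, Complex.I_re]; linarith

theorem ico_exp_sqrt (t : ℝ) (ht : 0 < t) : Real.exp (5 / 2 * Real.log t) = t ^ 2 * √t := by
  rw [show 5 / 2 * Real.log t = Real.log t + Real.log t + Real.log t / 2 by ring, Real.exp_add, Real.exp_add,
    Real.exp_log ht, ← Real.log_sqrt ht.le, Real.exp_log (Real.sqrt_pos.2 ht)]
  ring

theorem icoS_W (t : ℝ) (ht : 0 < t) : icoS (icoW * t) = ((-(2 / 5 * (t ^ 2 * √t)) : ℝ) : ℂ) := by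
  rw [icoS, icoR, ← Complex.exp_nat_mul, icoW_log t ht, ← ico_exp_sqrt t ht]
  rw [show ((10:ℕ):ℂ) * ((Real.log t + (2 * Real.pi / 5 : ℝ) * Complex.I) / 4) = ((5 / 2 * Real.log t : ℝ) : ℂ) + Real.pi * Complex.I by
    push_cast; ring]
  rw [Complex.exp_add, Complex.exp_pi_mul_I]
  push_cast
  ring

theorem icoS_real (t : ℝ) (ht : 0 < t) : icoS t = ((2 / 5 * (t ^ 2 * √t) : ℝ) : ℂ) := by
  rw [icoS, icoR, ← Complex.exp_nat_mul, ← Complex.ofReal_log ht.le, ← ico_exp_sqrt t ht]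
  rw [show ((10:ℕ):ℂ) * ((Real.log t : ℂ) / 4) = ((5 / 2 * Real.log t : ℝ) : ℂ) by
    push_cast; ring]
  push_cast
  ring

theorem icoW_line (t : ℝ) : icoW * t = ((Real.cos (2 * Real.pi / 5) * t : ℝ) : ℂ) +
    Complex.I * ((Real.sin (2 * Real.pi / 5) * t : ℝ) : ℂ) := by
  rw [icoW_eq]; push_cast; ring

theorem icoW_norm : ‖icoW‖ = 1 := by rw [icoW]; exact Complex.norm_exp_ofReal_mul_I _

theorem icoW_sin : 0 < Real.sin (2 * Real.pi / 5) := by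
  have hp := Real.pi_pos
  apply Real.sin_pos_of_pos_of_lt_pi <;> linarith

theorem ico_lgW {lam : ℂ} {f f' : ℂ → ℂ} (hf : ∀ z, HasDerivAt f (f' z) z)
    (hf' : ∀ z, HasDerivAt f' ((z ^ 3 + lam) * f z) z)
    (hi : Integrable (fun s : ℝ => ‖f (Complex.I * s)‖ ^ 2)) (ε : ℝ) (hε : 0 < ε) (hε8 : ε ≤ 1 / 8) :
    ∃ T : ℝ, 1 ≤ T ∧ ∀ t : ℝ, T ≤ t → 1 ≤ Real.cos (2 * Real.pi / 5) * t ∧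
      ‖icoH f (icoW * t) - icoH f ((Real.cos (2 * Real.pi / 5) * t : ℝ) : ℂ)‖ ≤
        24 * ε * ‖icoH f ((Real.cos (2 * Real.pi / 5) * t : ℝ) : ℂ)‖ ∧
      ‖icoK f f' (icoW * t)‖ ≤ 8 * ε * ‖icoH f ((Real.cos (2 * Real.pi / 5) * t : ℝ) : ℂ)‖ := by
  obtain ⟨hc0, hc1⟩ := icoW_cos
  have hs0 := icoW_sin
  set c := Real.cos (2 * Real.pi / 5)
  have hl := norm_nonneg lam
  set D : ℝ := 8 * (‖lam‖ + 2) / ε with hD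
  have hD0 : 0 < D := by positivity
  refine ⟨max 1 (max (1 / c) (D ^ 2 / c)), le_max_left _ _, fun t ht => ?_⟩
  have ht1 : 1 ≤ t := (le_max_left _ _).trans ht
  have ht2 : 1 / c ≤ t := (le_max_left _ _).trans ((le_max_right _ _).trans ht)
  have ht3 : D ^ 2 / c ≤ t := (le_max_right _ _).trans ((le_max_right _ _).trans ht)
  rw [div_le_iff₀ hc0, mul_comm] at ht2 ht3
  have hR : 1 ≤ c * t := ht2
  have hD2 : D ≤ √(c * t) := Real.le_sqrt_of_sq_le ht3
  have hsp : 0 < √(c * t) := lt_of_lt_of_le hD0 hD2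
  have hε' : 8 * (‖lam‖ + 2) / √(c * t) ≤ ε := by
    rw [div_le_iff₀ hsp]
    rw [hD, div_le_iff₀ hε] at hD2
    linarith
  have := ico_lg hf hf' hi (c * t) hR ε hε' hε8 (Real.sin (2 * Real.pi / 5) * t) (by positivity)
  rw [← icoW_line] at this
  exact ⟨hR, this⟩

theorem icoH_norm (f : ℂ → ℂ) (z : ℂ) : ‖icoH f z‖ = ‖f z‖ * (‖icoR z‖ ^ 3 * ‖Complex.exp (-icoS z)‖) := by
  rw [icoH, norm_mul, norm_mul, norm_pow]; ring

theorem ico_ratio {lam mu : ℂ} {f f' g g' : ℂ → ℂ} (hf : ∀ z, HasDerivAt f (f' z) z)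
    (hf' : ∀ z, HasDerivAt f' ((z ^ 3 + lam) * f z) z)
    (hi : Integrable (fun s : ℝ => ‖f (Complex.I * s)‖ ^ 2))
    (hg : ∀ z, HasDerivAt g (g' z) z)
    (hg' : ∀ z, HasDerivAt g' ((z ^ 3 + mu) * g z) z)
    (hj : Integrable (fun s : ℝ => ‖g (Complex.I * s)‖ ^ 2))
    (hfg : ∀ R : ℝ, ‖f R‖ = ‖g R‖) (δ : ℝ) (hδ : 0 < δ) :
    ∃ T : ℝ, ∀ t : ℝ, T ≤ t → ‖f (icoW * t)‖ ≤ (1 + δ) * ‖g (icoW * t)‖ := by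
  set ε : ℝ := min (1 / 96) (δ / (24 * 8)) with hε
  have hε0 : 0 < ε := by rw [hε]; positivity
  have hε1 : ε ≤ 1 / 96 := min_le_left _ _
  have hε2 : ε ≤ δ / (24 * 8) := min_le_right _ _
  obtain ⟨T1, h1, H1⟩ := ico_lgW hf hf' hi ε hε0 (by linarith)
  obtain ⟨T2, h2, H2⟩ := ico_lgW hg hg' hj ε hε0 (by linarith)
  refine ⟨max T1 T2, fun t ht => ?_⟩
  obtain ⟨-, a1, -⟩ := H1 t ((le_max_left _ _).trans ht)
  obtain ⟨-, a2, -⟩ := H2 t ((le_max_right _ _).trans ht)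
  have e : ‖icoH f ((Real.cos (2 * Real.pi / 5) * t : ℝ) : ℂ)‖ = ‖icoH g ((Real.cos (2 * Real.pi / 5) * t : ℝ) : ℂ)‖ := by
    rw [icoH_norm, icoH_norm, hfg]
  rw [e] at a1
  have b1 := norm_sub_norm_le (icoH f (icoW * t)) (icoH f ((Real.cos (2 * Real.pi / 5) * t : ℝ) : ℂ))
  have b2 := norm_sub_norm_le (icoH g ((Real.cos (2 * Real.pi / 5) * t : ℝ) : ℂ)) (icoH g (icoW * t))
  rw [norm_sub_rev] at b2
  rw [e] at b1
  have hN := norm_nonneg (icoH g ((Real.cos (2 * Real.pi / 5) * t : ℝ) : ℂ))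
  set N := ‖icoH g ((Real.cos (2 * Real.pi / 5) * t : ℝ) : ℂ)‖
  rw [icoH_norm] at b1 b2
  have hw : 0 < ‖icoR (icoW * t)‖ ^ 3 * ‖Complex.exp (-icoS (icoW * t))‖ :=
    mul_pos (pow_pos (norm_pos_iff.2 (icoR_ne _)) 3) (norm_pos_iff.2 (Complex.exp_ne_zero _))
  set w := ‖icoR (icoW * t)‖ ^ 3 * ‖Complex.exp (-icoS (icoW * t))‖
  have c1 : ‖f (icoW * t)‖ * w ≤ (1 + 24 * ε) * N := by linarith
  have c2 : (1 - 24 * ε) * N ≤ ‖g (icoW * t)‖ * w := by linarith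
  have c3 : (1 + 24 * ε) * N ≤ (1 + δ) * ((1 - 24 * ε) * N) := by
    have : 1 + 24 * ε ≤ (1 + δ) * (1 - 24 * ε) := by nlinarith
    nlinarith
  have c4 : ‖f (icoW * t)‖ * w ≤ ((1 + δ) * ‖g (icoW * t)‖) * w := by
    have := mul_le_mul_of_nonneg_left c2 (by linarith : 0 ≤ 1 + δ)
    linarith
  exact le_of_mul_le_mul_right c4 hw

set_option maxHeartbeats 1000000 in
theorem ico_wdecay {lam : ℂ} {f f' : ℂ → ℂ} (hf : ∀ z, HasDerivAt f (f' z) z)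
    (hf' : ∀ z, HasDerivAt f' ((z ^ 3 + lam) * f z) z)
    (hi : Integrable (fun s : ℝ => ‖f (Complex.I * s)‖ ^ 2)) :
    ∃ C : ℝ, ∀ t : ℝ, 0 ≤ t → ‖f (icoW * t)‖ ≤ C * Real.exp (-t) ∧ ‖f' (icoW * t)‖ ≤ C * Real.exp (-t) := by
  obtain ⟨T1, h1, H1⟩ := ico_lgW hf hf' hi (1 / 8) (by norm_num) le_rfl
  obtain ⟨C, hC, T2, h2, H2⟩ := ico_growth hf hf'
  obtain ⟨hc0, hc1⟩ := icoW_cos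
  set c := Real.cos (2 * Real.pi / 5)
  set T := max T1 (max (T2 / c) 10) with hT
  have far : ∀ t, T ≤ t → ‖f (icoW * t)‖ ≤ (60 * C) * Real.exp (-t) ∧ ‖f' (icoW * t)‖ ≤ (60 * C) * Real.exp (-t) := by
    intro t ht
    have t1 : T1 ≤ t := (le_max_left _ _).trans ht
    have t2 : T2 / c ≤ t := (le_max_left _ _).trans ((le_max_right _ _).trans ht)
    have t3 : 10 ≤ t := (le_max_right _ _).trans ((le_max_right _ _).trans ht)
    rw [div_le_iff₀ hc0, mul_comm] at t2
    have ht0 : 0 < t := by linarith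
    obtain ⟨hR1, a1, a2⟩ := H1 t t1
    have hg := H2 (c * t) t2
    have hRt : c * t ≤ t / 2 := by nlinarith
    set R := c * t with hR
    have hR0 : 0 < R := by linarith
    -- bound for icoH at R
    have hRr := icoR_norm (z := (R:ℂ)) (by exact_mod_cast hR0.ne')
    have hWt0 : icoW * (t:ℂ) ≠ 0 := mul_ne_zero (Complex.exp_ne_zero _) (by exact_mod_cast ht0.ne')
    have hWr := icoR_norm hWt0
    rw [Complex.norm_real, Real.norm_eq_abs, abs_of_pos hR0] at hRr
    rw [norm_mul, icoW_norm, one_mul, Complex.norm_real, Real.norm_eq_abs, abs_of_pos ht0] at hWr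
    have one_le : ∀ x : ℝ, 0 ≤ x → 1 ≤ x ^ 4 → 1 ≤ x := by
      intro x hx h
      by_contra! hc
      have := pow_lt_one₀ hx hc (n := 4) (by norm_num)
      linarith
    have r1 : 1 ≤ ‖icoR (R:ℂ)‖ := one_le _ (norm_nonneg _) (by rw [hRr]; exact hR1)
    have w1 : 1 ≤ ‖icoR (icoW * t)‖ := one_le _ (norm_nonneg _) (by rw [hWr]; linarith)
    set X := t ^ 2 * √t with hX
    have hRX : R ^ 2 * √R ≤ X / 4 := by
      calc R ^ 2 * √R ≤ (t / 2) ^ 2 * √t := by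
            gcongr; linarith
        _ = X / 4 := by rw [hX]; ring
    have hHR : ‖icoH f R‖ ≤ C * t * Real.exp (X / 5) := by
      rw [icoH_norm, icoS_real R hR0, Complex.norm_exp]
      have e1 : ‖icoR (R:ℂ)‖ ^ 3 ≤ t := by
        calc ‖icoR (R:ℂ)‖ ^ 3 ≤ ‖icoR (R:ℂ)‖ ^ 4 := pow_le_pow_right₀ r1 (by norm_num)
          _ = R := hRr
          _ ≤ t := by linarith
      have e2 : Real.exp (-((2 / 5 * (R ^ 2 * √R) : ℝ) : ℂ)).re ≤ 1 := by
        rw [Complex.neg_re, Complex.ofReal_re]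
        apply Real.exp_le_one_iff.2
        have : 0 ≤ R ^ 2 * √R := by positivity
        linarith
      have e3 : ‖f R‖ ≤ C * Real.exp (X / 5) := hg.trans (by gcongr; linarith)
      calc ‖f R‖ * (‖icoR (R:ℂ)‖ ^ 3 * Real.exp (-((2 / 5 * (R ^ 2 * √R) : ℝ) : ℂ)).re)
          ≤ (C * Real.exp (X / 5)) * (t * 1) := by gcongr
        _ = _ := by ring
    have hexpS : ‖Complex.exp (icoS (icoW * t))‖ = Real.exp (-(2 / 5 * X)) := by
      rw [icoS_W t ht0, Complex.norm_exp, Complex.ofReal_re]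
    have hexpN : Complex.exp (icoS (icoW * t)) * Complex.exp (-icoS (icoW * t)) = 1 := by
      rw [← Complex.exp_add, add_neg_cancel, Complex.exp_zero]
    have hr0 := icoR_ne (icoW * t)
    have b1 : ‖icoH f (icoW * t)‖ ≤ 4 * (C * t * Real.exp (X / 5)) := by
      have := norm_sub_norm_le (icoH f (icoW * t)) (icoH f R)
      linarith
    have b2 : ‖icoK f f' (icoW * t)‖ ≤ C * t * Real.exp (X / 5) := by linarith
    have f1 : f (icoW * t) = icoH f (icoW * t) * (icoR (icoW * t) ^ 3)⁻¹ * Complex.exp (icoS (icoW * t)) := by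
      rw [icoH]
      field_simp
      linear_combination -f (icoW * t) * hexpN
    have f2 : f' (icoW * t) = 2 * icoR (icoW * t) ^ 3 * icoK f f' (icoW * t) * Complex.exp (icoS (icoW * t)) +
       (icoR (icoW * t) ^ 6 - 3 / 4 * (icoR (icoW * t) ^ 4)⁻¹) * f (icoW * t) := by
      rw [icoK]
      set r := icoR (icoW * t)
      have : 2 * r ^ 3 * (1 / 2 * (r ^ 3)⁻¹ * Complex.exp (-icoS (icoW * t)) * (f' (icoW * t) - (r ^ 6 - 3 / 4 * (r ^ 4)⁻¹) * f (icoW * t))) * Complex.exp (icoS (icoW * t)) =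
          (f' (icoW * t) - (r ^ 6 - 3 / 4 * (r ^ 4)⁻¹) * f (icoW * t)) * (r ^ 3 * (r ^ 3)⁻¹) * (Complex.exp (icoS (icoW * t)) * Complex.exp (-icoS (icoW * t))) := by ring
      rw [this, hexpN, mul_inv_cancel₀ (pow_ne_zero _ hr0)]
      ring
    set ρ := ‖icoR (icoW * t)‖ with hρ
    set Y := Real.exp (-(X / 5)) with hY
    have hYY : Real.exp (X / 5) * Real.exp (-(2 / 5 * X)) = Y := by
      rw [← Real.exp_add, hY]; congr 1; ring
    have n1 : ‖f (icoW * t)‖ ≤ 4 * C * t * Y := by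
      rw [f1, norm_mul, norm_mul, norm_inv, norm_pow, ← hρ, hexpS]
      have : (ρ ^ 3)⁻¹ ≤ 1 := inv_le_one_of_one_le₀ (one_le_pow₀ w1)
      calc ‖icoH f (icoW * t)‖ * (ρ ^ 3)⁻¹ * Real.exp (-(2 / 5 * X)) ≤
          (4 * (C * t * Real.exp (X / 5))) * 1 * Real.exp (-(2 / 5 * X)) := by gcongr
        _ = 4 * C * t * (Real.exp (X / 5) * Real.exp (-(2 / 5 * X))) := by ring
        _ = _ := by rw [hYY]
    have n2 : ‖f' (icoW * t)‖ ≤ 10 * C * t ^ 3 * Y := by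
      rw [f2]
      refine (norm_add_le _ _).trans ?_
      have p3 : ρ ^ 3 ≤ t := by
        calc ρ ^ 3 ≤ ρ ^ 4 := pow_le_pow_right₀ w1 (by norm_num)
          _ = t := hWr
      have p6 : ρ ^ 6 ≤ t ^ 2 := by
        calc ρ ^ 6 ≤ ρ ^ 8 := pow_le_pow_right₀ w1 (by norm_num)
          _ = (ρ ^ 4) ^ 2 := by ring
          _ = t ^ 2 := by rw [hWr]
      have p4 : ‖icoR (icoW * t) ^ 6 - 3 / 4 * (icoR (icoW * t) ^ 4)⁻¹‖ ≤ 2 * t ^ 2 := by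
        refine (norm_sub_le _ _).trans ?_
        rw [norm_mul, norm_inv, norm_pow, norm_pow, ← hρ, show ‖(3 / 4 : ℂ)‖ = 3 / 4 by norm_num]
        have : (ρ ^ 4)⁻¹ ≤ 1 := inv_le_one_of_one_le₀ (one_le_pow₀ w1)
        nlinarith
      have q1 : ‖2 * icoR (icoW * t) ^ 3 * icoK f f' (icoW * t) * Complex.exp (icoS (icoW * t))‖ ≤ 2 * C * t ^ 2 * Y := by
        rw [norm_mul, norm_mul, norm_mul, norm_pow, ← hρ, hexpS, Complex.norm_two]
        calc 2 * ρ ^ 3 * ‖icoK f f' (icoW * t)‖ * Real.exp (-(2 / 5 * X)) ≤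
             2 * t * (C * t * Real.exp (X / 5)) * Real.exp (-(2 / 5 * X)) := by gcongr
          _ = 2 * C * t ^ 2 * (Real.exp (X / 5) * Real.exp (-(2 / 5 * X))) := by ring
          _ = _ := by rw [hYY]
      have q2 : ‖(icoR (icoW * t) ^ 6 - 3 / 4 * (icoR (icoW * t) ^ 4)⁻¹) * f (icoW * t)‖ ≤ 2 * t ^ 2 * (4 * C * t * Y) := by
        rw [norm_mul]
        gcongr
      have hY0 : 0 < Y := Real.exp_pos _
      have q3 : C * t ^ 2 * Y ≤ C * t ^ 3 * Y := by
        gcongr 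
        · linarith
        · norm_num
      linarith
    have hY0 : 0 < Y := Real.exp_pos _
    have hfin : t ^ 3 * Y ≤ 6 * Real.exp (-t) := by
      have g1 : t ^ 3 ≤ 6 * Real.exp t := by
        have := Real.pow_div_factorial_le_exp t ht0.le 3
        norm_num [Nat.factorial] at this
        linarith
      have g2 : 1 ≤ √t := by rw [Real.one_le_sqrt]; linarith
      have g3 : 2 * t ≤ X / 5 := by rw [hX]; nlinarith
      calc t ^ 3 * Y ≤ 6 * Real.exp t * Real.exp (-(2 * t)) := by
            have g4 : Y ≤ Real.exp (-(2 * t)) := Real.exp_le_exp.2 (by linarith)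
            gcongr
        _ = 6 * Real.exp (-t) := by rw [mul_assoc, ← Real.exp_add]; congr 2; ring
    have hfin2 : C * (t ^ 3 * Y) ≤ C * (6 * Real.exp (-t)) := by gcongr
    refine ⟨n1.trans ?_, n2.trans ?_⟩
    · have q3 : C * t * Y ≤ C * t ^ 3 * Y := by
        have : t ≤ t ^ 3 := le_self_pow₀ (by linarith) (by norm_num)
        gcongr
      have : 0 ≤ C * (6 * Real.exp (-t)) := by positivity
      linarith
    · linarith
  have hcf : Continuous f := continuous_iff_continuousAt.2 fun x => (hf x).continuousAt
  have hcf' : Continuous f' := continuous_iff_continuousAt.2 fun x => (hf' x).continuousAt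
  obtain ⟨B, hB⟩ := (isCompact_Icc (a := (0:ℝ)) (b := T)).exists_bound_of_continuousOn
    (f := fun t : ℝ => (‖f (icoW * t)‖ + ‖f' (icoW * t)‖) * Real.exp t) (by fun_prop)
  refine ⟨max (60 * C) B, fun t ht => ?_⟩
  have he := Real.exp_pos (-t)
  rcases le_total T t with h | h
  · obtain ⟨h3, h4⟩ := far t h
    have : 60 * C * Real.exp (-t) ≤ max (60 * C) B * Real.exp (-t) := by gcongr; exact le_max_left _ _
    exact ⟨h3.trans this, h4.trans this⟩
  · have h3 := (le_abs_self _).trans (hB t ⟨ht, h⟩)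
    have h4 : ‖f (icoW * t)‖ + ‖f' (icoW * t)‖ ≤ max (60 * C) B * Real.exp (-t) := by
      rw [Real.exp_neg, ← div_eq_mul_inv, le_div_iff₀ (Real.exp_pos _)]
      exact h3.trans (le_max_right _ _)
    exact ⟨by linarith [norm_nonneg (f' (icoW * t))], by linarith [norm_nonneg (f (icoW * t))]⟩

def IcoDec {E : Type} [NormedAddCommGroup E] (g : ℝ → E) : Prop :=
  Continuous g ∧ ∃ C : ℝ, ∀ t : ℝ, 0 ≤ t → ‖g t‖ ≤ C * Real.exp (-t)

theorem IcoDec.nonneg {E : Type} [NormedAddCommGroup E] {g : ℝ → E} (h : IcoDec g) :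
    ∃ C : ℝ, 0 ≤ C ∧ ∀ t : ℝ, 0 ≤ t → ‖g t‖ ≤ C * Real.exp (-t) := by
  obtain ⟨_, C, hC⟩ := h
  refine ⟨C, ?_, hC⟩
  have := hC 0 le_rfl
  simp at this
  exact (norm_nonneg _).trans this

theorem IcoDec.plus {E : Type} [NormedAddCommGroup E] {g h : ℝ → E} (hg : IcoDec g) (hh : IcoDec h) :
    IcoDec (fun t => g t + h t) := by
  refine ⟨hg.1.add hh.1, ?_⟩
  obtain ⟨C, hC⟩ := hg.2
  obtain ⟨D, hD⟩ := hh.2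
  refine ⟨C + D, fun t ht => (norm_add_le _ _).trans ?_⟩
  rw [add_mul]
  exact add_le_add (hC t ht) (hD t ht)

theorem IcoDec.times {E : Type} [NormedRing E] {g h : ℝ → E} (hg : IcoDec g) (hh : IcoDec h) :
    IcoDec (fun t => g t * h t) := by
  refine ⟨hg.1.mul hh.1, ?_⟩
  obtain ⟨C, hC0, hC⟩ := hg.nonneg
  obtain ⟨D, hD0, hD⟩ := hh.nonneg
  refine ⟨C * D, fun t ht => (norm_mul_le _ _).trans ?_⟩
  have he : Real.exp (-t) ≤ 1 := Real.exp_le_one_iff.2 (by linarith)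
  have h0 := Real.exp_pos (-t)
  calc ‖g t‖ * ‖h t‖ ≤ (C * Real.exp (-t)) * (D * Real.exp (-t)) := by
        gcongr
        · exact hC t ht
        · exact hD t ht
    _ = C * D * Real.exp (-t) * Real.exp (-t) := by ring
    _ ≤ C * D * Real.exp (-t) * 1 := by gcongr
    _ = _ := by ring

theorem IcoDec.const {E : Type} [NormedRing E] {g : ℝ → E} (hg : IcoDec g) (c : E) :
    IcoDec (fun t => c * g t) := by
  refine ⟨continuous_const.mul hg.1, ?_⟩
  obtain ⟨C, hC⟩ := hg.2
  refine ⟨‖c‖ * C, fun t ht => (norm_mul_le _ _).trans ?_⟩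
  rw [mul_assoc]
  gcongr
  exact hC t ht

theorem IcoDec.cube {g h : ℝ → ℝ} (hg : IcoDec g) (hh : IcoDec h) :
    IcoDec (fun t => t ^ 3 * (g t * h t)) := by
  refine ⟨(continuous_id.pow 3).mul (hg.1.mul hh.1), ?_⟩
  obtain ⟨C, hC0, hC⟩ := hg.nonneg
  obtain ⟨D, hD0, hD⟩ := hh.nonneg
  refine ⟨6 * (C * D), fun t ht => ?_⟩
  have g1 : t ^ 3 ≤ 6 * Real.exp t := by
    have := Real.pow_div_factorial_le_exp t ht 3
    norm_num [Nat.factorial] at this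
    linarith
  have h0 := Real.exp_pos (-t)
  rw [norm_mul, norm_mul, norm_pow, Real.norm_of_nonneg ht]
  calc t ^ 3 * (‖g t‖ * ‖h t‖) ≤ (6 * Real.exp t) * ((C * Real.exp (-t)) * (D * Real.exp (-t))) := by
        gcongr
        · exact hC t ht
        · exact hD t ht
    _ = 6 * (C * D) * Real.exp (-t) * (Real.exp t * Real.exp (-t)) := by ring
    _ = _ := by rw [← Real.exp_add, add_neg_cancel, Real.exp_zero, mul_one]

theorem IcoDec.reim {g : ℝ → ℂ} (hg : IcoDec g) : IcoDec (fun t => (g t).re) ∧ IcoDec (fun t => (g t).im) := by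
  obtain ⟨C, hC⟩ := hg.2
  refine ⟨⟨Complex.continuous_re.comp hg.1, C, fun t ht => ?_⟩, ⟨Complex.continuous_im.comp hg.1, C, fun t ht => ?_⟩⟩
  · exact (Complex.abs_re_le_norm _).trans (hC t ht)
  · exact (Complex.abs_im_le_norm _).trans (hC t ht)

theorem IcoDec.nrm {g : ℝ → ℂ} (hg : IcoDec g) : IcoDec (fun t => ‖g t‖) := by
  obtain ⟨C, hC⟩ := hg.2
  exact ⟨hg.1.norm, C, fun t ht => by rw [norm_norm]; exact hC t ht⟩

theorem IcoDec.ofReal {g : ℝ → ℝ} (hg : IcoDec g) : IcoDec (fun t => (g t : ℂ)) := by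
  obtain ⟨C, hC⟩ := hg.2
  exact ⟨Complex.continuous_ofReal.comp hg.1, C, fun t ht => by rw [Complex.norm_real]; exact hC t ht⟩

theorem IcoDec.integrable {E : Type} [NormedAddCommGroup E] {g : ℝ → E} (hg : IcoDec g) {x : ℝ}
    (hx : 0 ≤ x) : IntegrableOn g (Set.Ioi x) := by
  obtain ⟨C, hC⟩ := hg.2
  refine Integrable.mono' ((integrableOn_exp_neg_Ioi x).const_mul C) hg.1.aestronglyMeasurable.restrict ?_
  refine (ae_restrict_iff' measurableSet_Ioi).2 (Filter.Eventually.of_forall fun t ht => ?_)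
  exact hC t (hx.trans (le_of_lt ht))

theorem IcoDec.tendsto {E : Type} [NormedAddCommGroup E] {g : ℝ → E} (hg : IcoDec g) :
    Filter.Tendsto g Filter.atTop (nhds 0) := by
  obtain ⟨C, hC⟩ := hg.2
  refine squeeze_zero_norm' (a := fun t => C * Real.exp (-t)) ?_ ?_
  · filter_upwards [Filter.eventually_ge_atTop 0] with t ht using hC t ht
  · have := (Real.tendsto_exp_neg_atTop_nhds_zero).const_mul C
    simpa using this

theorem ico_pos {f : ℝ → ℝ} (hf : Continuous f) {x y : ℝ} (hxy : x ≤ y) (h0 : ∀ t, x < t → 0 ≤ f t)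
    (hi : IntegrableOn f (Set.Ioi x)) (hy : f y ≠ 0) : 0 < ∫ t in Set.Ioi x, f t := by
  rw [setIntegral_pos_iff_support_of_nonneg_ae ((ae_restrict_iff' measurableSet_Ioi).2 (Filter.Eventually.of_forall h0)) hi]
  have ho : IsOpen (Function.support f) := hf.isOpen_support
  refine (ho.inter isOpen_Ioi).measure_pos _ ?_
  have h1 : Function.support f ∈ nhdsWithin y (Set.Ioi y) := mem_nhdsWithin_of_mem_nhds (ho.mem_nhds hy)
  obtain ⟨z, hz1, hz2⟩ := Filter.nonempty_of_mem (Filter.inter_mem h1 self_mem_nhdsWithin)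
  exact ⟨z, hz1, lt_of_le_of_lt hxy hz2⟩

theorem ico_cs {F φ : ℝ → ℂ} (hF : IcoDec F) (hφ : IcoDec φ) {x : ℝ} (hx : 0 ≤ x) :
    ‖∫ t in Set.Ioi x, F t * φ t‖ ^ 2 ≤ (∫ t in Set.Ioi x, ‖F t‖ ^ 2) * ∫ t in Set.Ioi x, ‖φ t‖ ^ 2 := by
  have h1 : ‖∫ t in Set.Ioi x, F t * φ t‖ ≤ ∫ t in Set.Ioi x, ‖F t‖ * ‖φ t‖ := by
    refine (norm_integral_le_integral_norm _).trans (le_of_eq ?_)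
    simp only [norm_mul]
  have ia : IntegrableOn (fun t => ‖F t‖ ^ 2) (Set.Ioi x) := by
    simpa only [sq] using (hF.nrm.times hF.nrm).integrable hx
  have ib : IntegrableOn (fun t => ‖F t‖ * ‖φ t‖) (Set.Ioi x) := (hF.nrm.times hφ.nrm).integrable hx
  have ic : IntegrableOn (fun t => ‖φ t‖ ^ 2) (Set.Ioi x) := by
    simpa only [sq] using (hφ.nrm.times hφ.nrm).integrable hx
  set a := ∫ t in Set.Ioi x, ‖F t‖ ^ 2
  set b := ∫ t in Set.Ioi x, ‖F t‖ * ‖φ t‖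
  set c := ∫ t in Set.Ioi x, ‖φ t‖ ^ 2
  have key : ∀ s : ℝ, 0 ≤ c * (s * s) + (-2 * b) * s + a := by
    intro s
    have h2 : 0 ≤ ∫ t in Set.Ioi x, (‖φ t‖ ^ 2 * (s * s) + (‖F t‖ * ‖φ t‖) * (-2 * s) + ‖F t‖ ^ 2) :=
      integral_nonneg fun t => by
        simp only [Pi.zero_apply]
        nlinarith [sq_nonneg (‖F t‖ - s * ‖φ t‖)]
    have iab : Integrable (fun t => ‖φ t‖ ^ 2 * (s * s) + (‖F t‖ * ‖φ t‖) * (-2 * s)) (volume.restrict (Set.Ioi x)) :=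
      (ic.mul_const _).add (ib.mul_const _)
    rw [integral_add iab ia, integral_add (ic.mul_const _) (ib.mul_const _),
      integral_mul_const, integral_mul_const] at h2
    linarith
  have := discrim_le_zero key
  rw [discrim] at this
  have h3 : ‖∫ t in Set.Ioi x, F t * φ t‖ ^ 2 ≤ b ^ 2 := by gcongr
  nlinarith

theorem ico_key {F F1 G G1 : ℝ → ℂ} {n1 n2 : ℂ} (hF : ∀ t, HasDerivAt F (F1 t) t)
    (hF1 : ∀ t : ℝ, HasDerivAt F1 (((t:ℂ) ^ 3 + n1) * F t) t)
    (hG : ∀ t, HasDerivAt G (G1 t) t)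
    (hG1 : ∀ t : ℝ, HasDerivAt G1 (((t:ℂ) ^ 3 + n2) * G t) t)
    (dF : IcoDec F) (dF1 : IcoDec F1) (dG : IcoDec G) (dG1 : IcoDec G1)
    (hn : ‖n1‖ = ‖n2‖) (hre : n1.re < n2.re) (him : n2.im ≠ 0) {x : ℝ} (hx : 0 ≤ x)
    (hJ : 0 < ∫ t in Set.Ioi x, ‖G t‖ ^ 2) :
    G x ≠ 0 ∧ ∃ K > 0, ‖F x‖ ^ 2 * (n2.im ^ 2 * (∫ t in Set.Ioi x, ‖G t‖ ^ 2) ^ 2) ≤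
      (∫ t in Set.Ioi x, ‖F t‖ ^ 2) * (n2.im ^ 2 * ‖G x‖ ^ 2 * (∫ t in Set.Ioi x, ‖G t‖ ^ 2) - K) := by
  have hnn : ∀ z : ℂ, ‖z‖ ^ 2 = z.re ^ 2 + z.im ^ 2 := by
    intro z; rw [Complex.sq_norm, Complex.normSq_apply]; ring
  have hcube : ∀ t : ℝ, (t:ℂ) ^ 3 = ((t ^ 3 : ℝ) : ℂ) := fun t => by push_cast; ring
  set JG := ∫ t in Set.Ioi x, ‖G t‖ ^ 2 with hJG
  set a : ℂ := starRingEnd ℂ (G x) with ha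
  set U : ℝ → ℂ := fun t => a * G t with hU
  set U1 : ℝ → ℂ := fun t => a * G1 t with hU1
  have dU : IcoDec U := dG.const a
  have dU1 : IcoDec U1 := dG1.const a
  have eU : ∀ t, HasDerivAt U (U1 t) t := fun t => (hG t).const_mul a
  have eU1 : ∀ t : ℝ, HasDerivAt U1 (((t:ℂ) ^ 3 + n2) * U t) t := fun t =>
    ((hG1 t).const_mul a).congr_deriv (by simp only [hU]; ring)
  set u : ℝ → ℝ := fun t => (U t).im with hu
  set p : ℝ → ℝ := fun t => (U t).re with hp
  set u1 : ℝ → ℝ := fun t => (U1 t).im with hu1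
  have du : IcoDec u := dU.reim.2
  have dp : IcoDec p := dU.reim.1
  have du1 : IcoDec u1 := dU1.reim.2
  have eu : ∀ t, HasDerivAt u (u1 t) t := fun t => (ico_re_deriv (eU t)).2
  have eu1 : ∀ t, HasDerivAt u1 (t ^ 3 * u t + n2.re * u t + n2.im * p t) t := fun t =>
    ((ico_re_deriv (eU1 t)).2).congr_deriv (by
      rw [hcube]
      simp only [Complex.mul_im, Complex.add_re, Complex.add_im, Complex.ofReal_re, Complex.ofReal_im, hu, hp]
      ring)
  have hUx : U x = ((‖G x‖ ^ 2 : ℝ) : ℂ) := by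
    simp only [hU, ha]
    rw [mul_comm, Complex.mul_conj, Complex.normSq_eq_norm_sq]
  have hux : u x = 0 := by simp only [hu, hUx, Complex.ofReal_im]
  -- first integral
  have hw : u1 x = -(n2.im * JG) := by
    have e1 : ∀ t : ℝ, HasDerivAt (fun t => (G1 t).im * (G t).re - (G1 t).re * (G t).im) (n2.im * ‖G t‖ ^ 2) t := by
      intro t
      have b1 := ico_re_deriv (hG t)
      have b2 := ico_re_deriv (hG1 t)
      refine ((b2.2.mul b1.1).sub (b2.1.mul b1.2)).congr_deriv ?_
      rw [hcube, hnn]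
      simp only [Complex.mul_im, Complex.mul_re, Complex.add_re, Complex.add_im, Complex.ofReal_re, Complex.ofReal_im]
      ring
    have d1 : IcoDec (fun t => (G1 t).im * (G t).re - (G1 t).re * (G t).im) := by
      have := (dG1.reim.2.times dG.reim.1).plus ((dG1.reim.1.times dG.reim.2).const (-1))
      refine ⟨by simpa [sub_eq_add_neg] using this.1, by simpa [sub_eq_add_neg] using this.2⟩
    have d2 : IcoDec (fun t => n2.im * ‖G t‖ ^ 2) := by
      simpa only [sq] using (dG.nrm.times dG.nrm).const n2.im
    have := integral_Ioi_of_hasDerivAt_of_tendsto (d1.1.continuousWithinAt) (fun t _ => e1 t) (d2.integrable hx) d1.tendsto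
    rw [integral_const_mul, ← hJG] at this
    rw [this]
    simp only [hu1, hU1, ha, Complex.mul_im, Complex.conj_re, Complex.conj_im]
    ring
  set α := n2.re with hα
  set β := n2.im with hβ
  set φ : ℝ → ℂ := fun t => (n1 - α) * (u t : ℂ) + (-(β:ℂ)) * (p t : ℂ) with hφ
  have dφ : IcoDec φ := (du.ofReal.const _).plus (dp.ofReal.const _)
  have hFφ : ∫ t in Set.Ioi x, F t * φ t = F x * u1 x := by
    have e1 : ∀ t : ℝ, HasDerivAt (fun t => F1 t * (u t : ℂ) + (-1) * (F t * (u1 t : ℂ))) (F t * φ t) t := by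
      intro t
      have b1 : HasDerivAt (fun t => (u t : ℂ)) ((u1 t : ℝ) : ℂ) t := (eu t).ofReal_comp
      have b2 : HasDerivAt (fun t => (u1 t : ℂ)) _ t := (eu1 t).ofReal_comp
      refine (((hF1 t).mul b1).add (((hF t).mul b2).const_mul (-1))).congr_deriv ?_
      simp only [hφ]
      push_cast
      ring
    have d1 : IcoDec (fun t => F1 t * (u t : ℂ) + (-1) * (F t * (u1 t : ℂ))) :=
      (dF1.times du.ofReal).plus ((dF.times du1.ofReal).const (-1))
    rw [integral_Ioi_of_hasDerivAt_of_tendsto (d1.1.continuousWithinAt) (fun t _ => e1 t) ((dF.times dφ).integrable hx) d1.tendsto]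
    rw [hux]
    push_cast
    ring
  set D : ℝ → ℝ := fun t => u1 t * u1 t + t ^ 3 * (u t * u t) + (α * (u t * u t) + β * (p t * u t)) with hD
  set Q : ℝ → ℝ := fun t => u1 t * u1 t + t ^ 3 * (u t * u t) with hQ
  have dQ : IcoDec Q := (du1.times du1).plus (du.cube du)
  have dD : IcoDec D := dQ.plus (((du.times du).const α).plus ((dp.times du).const β))
  have hDint : ∫ t in Set.Ioi x, D t = 0 := by
    have e1 : ∀ t : ℝ, HasDerivAt (fun t => u t * u1 t) (D t) t := by
      intro t
      refine ((eu t).mul (eu1 t)).congr_deriv ?_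
      simp only [hD]
      ring
    have d1 : IcoDec (fun t => u t * u1 t) := du.times du1
    rw [integral_Ioi_of_hasDerivAt_of_tendsto (d1.1.continuousWithinAt) (fun t _ => e1 t) (dD.integrable hx) d1.tendsto, hux]
    ring
  have hβJ : β * JG ≠ 0 := mul_ne_zero him hJ.ne'
  have hKpos : 0 < ∫ t in Set.Ioi x, Q t := by
    refine ico_pos dQ.1 le_rfl (fun t ht => ?_) (dQ.integrable hx) ?_
    · have : 0 ≤ t := hx.trans ht.le
      have h3 : 0 ≤ t ^ 3 := by positivity
      simp only [hQ]
      exact add_nonneg (mul_self_nonneg _) (mul_nonneg h3 (mul_self_nonneg _))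
    · simp only [hQ, hux, hw]
      have := mul_self_pos.2 hβJ
      intro h
      nlinarith
  have hn' : n1.re ^ 2 + n1.im ^ 2 = α ^ 2 + β ^ 2 := by
    rw [← hnn, hα, hβ, ← hnn, hn]
  have hpt : ∀ t, ‖φ t‖ ^ 2 = β ^ 2 * ‖G x‖ ^ 2 * ‖G t‖ ^ 2 + (-(2 * (α - n1.re)) * Q t + 2 * (α - n1.re) * D t) := by
    intro t
    have h1 : p t ^ 2 + u t ^ 2 = ‖G x‖ ^ 2 * ‖G t‖ ^ 2 := by
      rw [← mul_pow, ← hnn (U t)]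
      simp only [hU, ha, norm_mul, RCLike.norm_conj]
    rw [hnn]
    simp only [hφ, hQ, hD, Complex.mul_im, Complex.mul_re, Complex.add_re, Complex.add_im, Complex.sub_re,
      Complex.sub_im, Complex.neg_re, Complex.neg_im, Complex.ofReal_re, Complex.ofReal_im]
    linear_combination (u t ^ 2) * hn' + β ^ 2 * h1
  have hφint : ∫ t in Set.Ioi x, ‖φ t‖ ^ 2 = β ^ 2 * ‖G x‖ ^ 2 * JG - 2 * (α - n1.re) * ∫ t in Set.Ioi x, Q t := by
    simp only [hpt]
    have i1 : Integrable (fun t => β ^ 2 * ‖G x‖ ^ 2 * ‖G t‖ ^ 2) (volume.restrict (Set.Ioi x)) := by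
      have := ((dG.nrm.times dG.nrm).const (β ^ 2 * ‖G x‖ ^ 2)).integrable hx
      simp only [← sq] at this
      exact this
    have i2 : Integrable (fun t => -(2 * (α - n1.re)) * Q t) (volume.restrict (Set.Ioi x)) := (dQ.const _).integrable hx
    have i3 : Integrable (fun t => 2 * (α - n1.re) * D t) (volume.restrict (Set.Ioi x)) := (dD.const _).integrable hx
    have i4 : Integrable (fun t => -(2 * (α - n1.re)) * Q t + 2 * (α - n1.re) * D t) (volume.restrict (Set.Ioi x)) := i2.add i3
    rw [integral_add i1 i4, integral_add i2 i3, integral_const_mul, integral_const_mul, integral_const_mul, hDint]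
    ring
  refine ⟨fun hGx => hβJ ?_, 2 * (α - n1.re) * ∫ t in Set.Ioi x, Q t, by
    have : 0 < α - n1.re := by linarith
    positivity, ?_⟩
  · have : u1 x = 0 := by simp [hu1, hU1, ha, hGx]
    linarith
  have := ico_cs dF dφ hx
  rw [hFφ, hφint, norm_mul, mul_pow, Complex.norm_real, Real.norm_eq_abs, sq_abs, hw] at this
  calc _ = ‖F x‖ ^ 2 * (-(β * JG)) ^ 2 := by ring
    _ ≤ _ := this

theorem ico_J {G : ℝ → ℂ} (dG : IcoDec G) : ∃ J : ℝ → ℝ, (∀ x, HasDerivAt J (-‖G x‖ ^ 2) x) ∧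
    ∀ x, 0 ≤ x → J x = ∫ t in Set.Ioi x, ‖G t‖ ^ 2 := by
  have hc : Continuous (fun t => ‖G t‖ ^ 2) := dG.1.norm.pow 2
  refine ⟨fun x => (∫ t in Set.Ioi 0, ‖G t‖ ^ 2) - ∫ t in (0:ℝ)..x, ‖G t‖ ^ 2, fun x => ?_, fun x hx => ?_⟩
  · exact ((hc.integral_hasStrictDerivAt 0 x).hasDerivAt.const_sub _)
  · have := intervalIntegral.integral_interval_add_Ioi (f := fun t => ‖G t‖ ^ 2) (a := 0) (b := x) (μ := volume)
      (by simpa only [sq] using (dG.nrm.times dG.nrm).integrable le_rfl)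
      (by simpa only [sq] using (dG.nrm.times dG.nrm).integrable hx)
    linarith

theorem ico_lemmaB {F F1 G G1 : ℝ → ℂ} {n1 n2 : ℂ} (hF : ∀ t, HasDerivAt F (F1 t) t)
    (hF1 : ∀ t : ℝ, HasDerivAt F1 (((t:ℂ) ^ 3 + n1) * F t) t)
    (hG : ∀ t, HasDerivAt G (G1 t) t)
    (hG1 : ∀ t : ℝ, HasDerivAt G1 (((t:ℂ) ^ 3 + n2) * G t) t)
    (dF : IcoDec F) (dF1 : IcoDec F1) (dG : IcoDec G) (dG1 : IcoDec G1)
    (hn : ‖n1‖ = ‖n2‖) (hre : n1.re < n2.re) (him : n2.im ≠ 0)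
    (hne : ∃ t, G t ≠ 0) (h0 : ‖F 0‖ = ‖G 0‖)
    (hratio : ∀ δ > 0, ∃ T : ℝ, ∀ t : ℝ, T ≤ t → ‖F t‖ ≤ (1 + δ) * ‖G t‖) : False := by
  have hGpos : ∀ x, 0 ≤ x → 0 < ∫ t in Set.Ioi x, ‖G t‖ ^ 2 := by
    intro x hx
    have : ∃ y, x ≤ y ∧ G y ≠ 0 := by
      by_contra! hcon
      obtain ⟨t, ht⟩ := hne
      have hz : HasDerivAt G 0 (x + 1) := by
        refine (hasDerivAt_const (x + 1) (0:ℂ)).congr_of_eventuallyEq ?_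
        filter_upwards [lt_mem_nhds (show x < x + 1 by linarith)] with y hy using hcon y hy.le
      exact ht (ico_unique (P := fun t : ℝ => (t:ℂ) ^ 3 + n2) (by fun_prop) (x + 1) hG hG1 (hcon _ (by linarith))
        ((hG (x + 1)).unique hz) t)
    obtain ⟨y, hy, hGy⟩ := this
    refine ico_pos (f := fun t => ‖G t‖ ^ 2) (dG.1.norm.pow 2) hy (fun t _ => by positivity) ?_ (by simpa using hGy)
    simpa only [sq] using (dG.nrm.times dG.nrm).integrable hx
  obtain ⟨JF, dJF, eJF⟩ := ico_J dF
  obtain ⟨JG, dJG, eJG⟩ := ico_J dG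
  have hJF0 : ∀ x, 0 ≤ x → 0 ≤ JF x := fun x hx => by
    rw [eJF x hx]; exact integral_nonneg fun t => by positivity
  have hJGp : ∀ x, 0 ≤ x → 0 < JG x := fun x hx => by rw [eJG x hx]; exact hGpos x hx
  have key : ∀ x, 0 ≤ x → ∃ K > 0, ‖F x‖ ^ 2 * (n2.im ^ 2 * (JG x) ^ 2) ≤ JF x * (n2.im ^ 2 * ‖G x‖ ^ 2 * JG x - K) := by
    intro x hx
    rw [eJF x hx, eJG x hx]
    exact (ico_key hF hF1 hG hG1 dF dF1 dG dG1 hn hre him hx (hGpos x hx)).2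
  have hb : 0 < n2.im ^ 2 := by positivity
  have weak : ∀ x, 0 ≤ x → ‖F x‖ ^ 2 * JG x ≤ JF x * ‖G x‖ ^ 2 := by
    intro x hx
    obtain ⟨K, hK, h⟩ := key x hx
    have h1 := hJF0 x hx
    have h2 := hJGp x hx
    have h3 : 0 ≤ JF x * K := by positivity
    have h4 : (‖F x‖ ^ 2 * JG x) * (n2.im ^ 2 * JG x) ≤ (JF x * ‖G x‖ ^ 2) * (n2.im ^ 2 * JG x) := by nlinarith
    exact le_of_mul_le_mul_right h4 (by positivity)
  have mono : ∀ b, 0 ≤ b → JF 0 / JG 0 ≤ JF b / JG b := by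
    intro b hb
    have := ico_mono (g := fun x => JF x / JG x) hb 0 (fun x hx => (dJF x).div (dJG x) (hJGp x hx.1).ne') (fun x hx => by
      have := weak x hx.1
      apply div_nonneg _ (by positivity)
      nlinarith)
    linarith
  have hle : ∀ δ > 0, JF 0 / JG 0 ≤ (1 + δ) ^ 2 := by
    intro δ hδ
    obtain ⟨T, hT⟩ := hratio δ hδ
    have hm : 0 ≤ max T 0 := le_max_right _ _
    refine (mono (max T 0) hm).trans ?_
    rw [div_le_iff₀ (hJGp _ hm), eJF _ hm, eJG _ hm, ← integral_const_mul]
    refine setIntegral_mono_on ?_ ?_ measurableSet_Ioi (fun t ht => ?_)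
    · simpa only [sq] using (dF.nrm.times dF.nrm).integrable hm
    · have := ((dG.nrm.times dG.nrm).const ((1 + δ) ^ 2)).integrable hm
      simpa only [sq] using this
    · rw [← mul_pow]
      gcongr
      exact hT t ((le_max_left _ _).trans (le_of_lt ht))
  have hle1 : JF 0 / JG 0 ≤ 1 := by
    have hc : Filter.Tendsto (fun δ : ℝ => (1 + δ) ^ 2) (nhdsWithin 0 (Set.Ioi 0)) (nhds ((1 + 0) ^ 2)) :=
      (Continuous.tendsto (by fun_prop) 0).mono_left nhdsWithin_le_nhds
    have := ge_of_tendsto hc (by filter_upwards [self_mem_nhdsWithin] with δ hδ using hle δ hδ)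
    simpa using this
  rw [div_le_one (hJGp 0 le_rfl)] at hle1
  obtain ⟨K, hK, h⟩ := key 0 le_rfl
  rw [h0] at h
  have h1 := hJF0 0 le_rfl
  have h2 := hJGp 0 le_rfl
  set N := ‖G 0‖ ^ 2 with hN
  have hN0 : 0 ≤ N := by positivity
  have h3 : 0 < N := by
    have := norm_pos_iff.2 (ico_key hF hF1 hG hG1 dF dF1 dG dG1 hn hre him le_rfl (hGpos 0 le_rfl)).1
    positivity
  · by_cases h4 : 0 ≤ n2.im ^ 2 * N * JG 0 - K
    · have := mul_le_mul_of_nonneg_right hle1 h4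
      nlinarith [mul_pos hK h2]
    · push Not at h4
      have : JF 0 * (n2.im ^ 2 * N * JG 0 - K) ≤ 0 := mul_nonpos_of_nonneg_of_nonpos h1 h4.le
      have h5 : 0 < N * (n2.im ^ 2 * JG 0 ^ 2) := by positivity
      linarith

theorem ico_core {lam : ℂ} {f f' g g' : ℂ → ℂ} (hf : ∀ z, HasDerivAt f (f' z) z)
    (hf' : ∀ z, HasDerivAt f' ((z ^ 3 + lam) * f z) z)
    (hi : Integrable (fun s : ℝ => ‖f (Complex.I * s)‖ ^ 2))
    (hg : ∀ z, HasDerivAt g (g' z) z)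
    (hg' : ∀ z, HasDerivAt g' ((z ^ 3 + starRingEnd ℂ lam) * g z) z)
    (hj : Integrable (fun s : ℝ => ‖g (Complex.I * s)‖ ^ 2))
    (hfg : ∀ R : ℝ, ‖f R‖ = ‖g R‖) (hne : g 0 ≠ 0 ∨ g' 0 ≠ 0)
    (hre : 0 < lam.re) (him : 0 < lam.im) : False := by
  have hp := Real.pi_pos
  have hW5 : icoW ^ 5 = 1 := by
    rw [icoW, ← Complex.exp_nat_mul]
    rw [show ((5:ℕ):ℂ) * ((2 * Real.pi / 5 : ℝ) * Complex.I) = 2 * Real.pi * Complex.I by push_cast; ring]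
    exact Complex.exp_two_pi_mul_I
  have hW2 : icoW ^ 2 = Complex.exp ((4 * Real.pi / 5 : ℝ) * Complex.I) := by
    rw [icoW, ← Complex.exp_nat_mul]
    congr 1
    push_cast; ring
  have hWre : (icoW ^ 2).re < 0 := by
    rw [hW2, Complex.exp_ofReal_mul_I_re]
    apply Real.cos_neg_of_pi_div_two_lt_of_lt <;> linarith
  have hWim : 0 < (icoW ^ 2).im := by
    rw [hW2, Complex.exp_ofReal_mul_I_im]
    apply Real.sin_pos_of_pos_of_lt_pi <;> linarith
  have hcl : ∀ {h h' : ℂ → ℂ} (mu : ℂ), (∀ z, HasDerivAt h (h' z) z) → (∀ z, HasDerivAt h' ((z ^ 3 + mu) * h z) z) →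
      (∀ t : ℝ, HasDerivAt (fun t : ℝ => h (icoW * t)) (icoW * h' (icoW * t)) t) ∧
      (∀ t : ℝ, HasDerivAt (fun t : ℝ => icoW * h' (icoW * t)) (((t:ℂ) ^ 3 + icoW ^ 2 * mu) * h (icoW * t)) t) := by
    intro h h' mu h1 h2
    refine ⟨fun t => ?_, fun t => ?_⟩
    · simpa using ico_line h1 0 icoW t
    · have := (ico_line h2 0 icoW t).const_mul icoW
      simp only [zero_add] at this
      refine this.congr_deriv ?_
      linear_combination (t:ℂ) ^ 3 * h (icoW * t) * hW5
  have hdec : ∀ {h h' : ℂ → ℂ} (mu : ℂ), (∀ z, HasDerivAt h (h' z) z) → (∀ z, HasDerivAt h' ((z ^ 3 + mu) * h z) z) →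
      Integrable (fun s : ℝ => ‖h (Complex.I * s)‖ ^ 2) →
      IcoDec (fun t : ℝ => h (icoW * t)) ∧ IcoDec (fun t : ℝ => icoW * h' (icoW * t)) := by
    intro h h' mu h1 h2 h3
    obtain ⟨C, hC⟩ := ico_wdecay h1 h2 h3
    have c1 : Continuous h := continuous_iff_continuousAt.2 fun x => (h1 x).continuousAt
    have c2 : Continuous h' := continuous_iff_continuousAt.2 fun x => (h2 x).continuousAt
    refine ⟨⟨by fun_prop, C, fun t ht => (hC t ht).1⟩, ⟨by fun_prop, C, fun t ht => ?_⟩⟩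
    rw [norm_mul, icoW_norm, one_mul]
    exact (hC t ht).2
  obtain ⟨F1, F2⟩ := hcl lam hf hf'
  obtain ⟨G1, G2⟩ := hcl (starRingEnd ℂ lam) hg hg'
  obtain ⟨dF, dF1⟩ := hdec lam hf hf' hi
  obtain ⟨dG, dG1⟩ := hdec (starRingEnd ℂ lam) hg hg' hj
  refine ico_lemmaB F1 F2 G1 G2 dF dF1 dG dG1 (by rw [norm_mul, norm_mul, RCLike.norm_conj]) ?_ ?_ ?_ ?_ ?_
  · simp only [Complex.mul_re, Complex.conj_re, Complex.conj_im]
    nlinarith [mul_pos hWim him]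
  · simp only [Complex.mul_im, Complex.conj_re, Complex.conj_im]
    nlinarith [mul_pos hWim hre, mul_pos (neg_pos.2 hWre) him]
  · by_contra! hcon
    have hW0 : icoW ≠ 0 := Complex.exp_ne_zero _
    have e0 := hcon 0
    simp only [Complex.ofReal_zero, mul_zero] at e0
    have e1 : HasDerivAt (fun t : ℝ => g (icoW * t)) 0 0 :=
      (hasDerivAt_const (0:ℝ) (0:ℂ)).congr_of_eventuallyEq (Filter.Eventually.of_forall hcon)
    have e2 := (G1 0).unique e1
    simp only [Complex.ofReal_zero, mul_zero] at e2
    rcases hne with h | h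
    · exact h e0
    · exact h ((mul_eq_zero.1 e2).resolve_left hW0)
  · simpa using hfg 0
  · intro δ hδ
    exact ico_ratio hf hf' hi hg hg' hj hfg δ hδ

theorem eigenvalues_real_positive (lam : ℂ) (h : IsEigenvalueICO lam) :
    lam.im = 0 ∧ 0 < lam.re := by
  obtain ⟨ψ, hne, hcd, hint, heq⟩ := h
  have h1 : ∀ x, HasDerivAt ψ (deriv ψ x) x := fun x =>
    ((hcd.differentiable (by norm_num)) x).hasDerivAt
  have hcd1 : ContDiff ℝ 1 (deriv ψ) := by
    have : ContDiff ℝ (1 + 1) ψ := by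
      have e : (1 + 1 : WithTop ℕ∞) = 2 := by norm_num
      rw [e]; exact hcd
    exact (contDiff_succ_iff_deriv.1 this).2.2
  have h2 : ∀ x : ℝ, HasDerivAt (deriv ψ) ((Complex.I * (x:ℂ) ^ 3 - lam) * ψ x) x := fun x => by
    have := ((hcd1.differentiable (by norm_num)) x).hasDerivAt
    refine this.congr_deriv ?_
    linear_combination -(heq x)
  have hex : ∃ x0, ψ x0 ≠ 0 := by
    by_contra! hc
    exact hne (funext hc)
  obtain ⟨x0, hx0⟩ := hex
  have hre := ico_re_pos h1 h2 hint x0 hx0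
  refine ⟨?_, hre⟩
  have hI : Complex.I ^ 2 = -1 := Complex.I_sq
  obtain ⟨f, f', f0, f1, hf, hf'⟩ := ico_entire lam (ψ 0) (-Complex.I * deriv ψ 0)
  have hfψ : ∀ s : ℝ, f (Complex.I * s) = ψ s := by
    have a1 : ∀ x : ℝ, HasDerivAt (fun s : ℝ => f (Complex.I * s)) (Complex.I * f' (Complex.I * x)) x := by
      intro x; simpa using ico_line hf 0 Complex.I x
    have a2 : ∀ x : ℝ, HasDerivAt (fun s : ℝ => Complex.I * f' (Complex.I * s))
        ((Complex.I * (x:ℂ) ^ 3 - lam) * f (Complex.I * x)) x := by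
      intro x
      have := (ico_line hf' 0 Complex.I x).const_mul Complex.I
      simp only [zero_add] at this
      refine this.congr_deriv ?_
      linear_combination (Complex.I ^ 3 * x ^ 3 - Complex.I * x ^ 3 + lam) * f (Complex.I * x) * hI
    have := ico_unique (y := fun s : ℝ => f (Complex.I * s) - ψ s) (y1 := fun s : ℝ => Complex.I * f' (Complex.I * s) - deriv ψ s)
      (P := fun x : ℝ => Complex.I * (x:ℂ) ^ 3 - lam) (by fun_prop) 0 (fun t => (a1 t).sub (h1 t))
      (fun t => ((a2 t).sub (h2 t)).congr_deriv (by ring)) (by simp [f0]) (by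
        simp only [Complex.ofReal_zero, mul_zero, f1]
        linear_combination (-deriv ψ 0) * hI)
    intro s
    exact sub_eq_zero.1 (this s)
  have hi : Integrable (fun s : ℝ => ‖f (Complex.I * s)‖ ^ 2) := by simpa only [hfψ] using hint
  have hne0 : f 0 ≠ 0 ∨ f' 0 ≠ 0 := by
    by_contra! hc
    obtain ⟨c0, c1⟩ := hc
    rw [f0] at c0
    rw [f1] at c1
    have c2 : deriv ψ 0 = 0 := (mul_eq_zero.1 c1).resolve_left (neg_ne_zero.2 Complex.I_ne_zero)
    exact hx0 (ico_unique (P := fun x : ℝ => Complex.I * (x:ℂ) ^ 3 - lam) (by fun_prop) 0 h1 h2 c0 c2 x0)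
  set g : ℂ → ℂ := fun z => starRingEnd ℂ (f (starRingEnd ℂ z)) with hgdef
  set g' : ℂ → ℂ := fun z => starRingEnd ℂ (f' (starRingEnd ℂ z)) with hg'def
  have hg : ∀ z, HasDerivAt g (g' z) z := by
    intro z
    have := (hf (starRingEnd ℂ z)).conj_conj
    rw [Complex.conj_conj] at this
    exact this
  have hg' : ∀ z, HasDerivAt g' ((z ^ 3 + starRingEnd ℂ lam) * g z) z := by
    intro z
    have := (hf' (starRingEnd ℂ z)).conj_conj
    rw [Complex.conj_conj] at this
    refine this.congr_deriv ?_
    simp [hgdef]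
  have hj : Integrable (fun s : ℝ => ‖g (Complex.I * s)‖ ^ 2) := by
    have e : (fun s : ℝ => ‖g (Complex.I * s)‖ ^ 2) = fun s : ℝ => ‖f (Complex.I * ((-s : ℝ) : ℂ))‖ ^ 2 := by
      funext s
      simp only [hgdef, RCLike.norm_conj, map_mul, Complex.conj_I, Complex.conj_ofReal]
      push_cast
      rw [neg_mul, mul_neg]
    rw [e]
    exact hi.comp_neg
  have hfg : ∀ R : ℝ, ‖f R‖ = ‖g R‖ := fun R => by
    simp only [hgdef, RCLike.norm_conj, Complex.conj_ofReal]
  rcases lt_trichotomy lam.im 0 with h | h | h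
  · exfalso
    refine ico_core (lam := starRingEnd ℂ lam) hg hg' hj hf (by simpa using hf') hi (fun R => (hfg R).symm) hne0 (by simpa using hre)
      (by simpa using h)
  · exact h
  · exfalso
    refine ico_core hf hf' hi hg hg' hj hfg ?_ hre h
    simpa [hgdef, hg'def] using hne0
end

section
/- Let λ ∈ ℂ and let ψ₁, ψ₂ : ℝ → ℂ both be twice continuously differentiable, square-integrable on ℝ, and satisfy −ψ''(x) + i·x³·ψ(x) = λ·ψ(x) for all x ∈ ℝ. Then ψ₁ and ψ₂ are linearly dependent: there exist (a,b) ∈ ℂ × ℂ with (a,b) ≠ (0,0) and a·ψ₁(x) + b·ψ₂(x) = 0 for all x ∈ ℝ. -/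
open MeasureTheory

lemma gs_deriv {ψ : ℝ → ℂ} (h : ContDiff ℝ 2 ψ) :
    (∀ x, HasDerivAt ψ (deriv ψ x) x) ∧ (∀ x, HasDerivAt (deriv ψ) (deriv (deriv ψ) x) x) := by
  have h2 : ContDiff ℝ 1 (deriv ψ) := by
    have : ContDiff ℝ (1+1) ψ := by simpa [one_add_one_eq_two] using h
    exact (contDiff_succ_iff_deriv.1 this).2.2
  exact ⟨fun x => (h.differentiable (by norm_num) x).hasDerivAt,
    fun x => (h2.differentiable (by norm_num) x).hasDerivAt⟩

lemma gs_deriv_L2 (lam : ℂ) (ψ : ℝ → ℂ) (hs : ContDiff ℝ 2 ψ)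
    (hint : Integrable (fun x : ℝ => ‖ψ x‖ ^ 2))
    (heq : ∀ x : ℝ, -(deriv (deriv ψ) x) + Complex.I * (x : ℂ) ^ 3 * ψ x = lam * ψ x) :
    IntegrableOn (fun x : ℝ => ‖deriv ψ x‖ ^ 2) (Set.Ioi 0) := by
  obtain ⟨d1, d2⟩ := gs_deriv hs
  have c0 : Continuous ψ := continuous_iff_continuousAt.2 fun x => (d1 x).continuousAt
  have c1 : Continuous (deriv ψ) := continuous_iff_continuousAt.2 fun x => (d2 x).continuousAt
  have du : ∀ x, HasDerivAt (fun x => ‖ψ x‖ ^ 2) (2 * inner ℝ (ψ x) (deriv ψ x)) x :=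
    fun x => (d1 x).norm_sq
  have dg : ∀ x, HasDerivAt (fun x => 2 * inner ℝ (ψ x) (deriv ψ x))
      (2 * ‖deriv ψ x‖ ^ 2 - 2 * lam.re * ‖ψ x‖ ^ 2) x := by
    intro x
    have := ((d1 x).inner ℝ (d2 x)).const_mul 2
    refine this.congr_deriv ?_
    have e : deriv (deriv ψ) x = Complex.I * (x : ℂ) ^ 3 * ψ x - lam * ψ x := by
      linear_combination -(heq x)
    rw [e, real_inner_self_eq_norm_sq]
    have hx : ((x : ℂ) ^ 3) = ((x ^ 3 : ℝ) : ℂ) := by push_cast; rfl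
    have : inner ℝ (ψ x) (Complex.I * (x : ℂ) ^ 3 * ψ x - lam * ψ x) = - lam.re * ‖ψ x‖ ^ 2 := by
      rw [hx, ← Complex.normSq_eq_norm_sq, Complex.normSq_apply, Complex.inner]
      simp only [Complex.mul_re, Complex.sub_re, Complex.sub_im, Complex.mul_im, Complex.I_re,
        Complex.I_im, Complex.ofReal_re, Complex.ofReal_im, Complex.conj_re, Complex.conj_im]
      ring
    rw [this]; ring
  have hg : ∀ x, 2 * inner ℝ (ψ x) (deriv ψ x) = 2 * inner ℝ (ψ 0) (deriv ψ 0)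
      + 2 * (∫ t in (0:ℝ)..x, ‖deriv ψ t‖ ^ 2) - 2 * lam.re * ∫ t in (0:ℝ)..x, ‖ψ t‖ ^ 2 := by
    intro x
    have i1 : IntervalIntegrable (fun t => 2 * ‖deriv ψ t‖ ^ 2) volume 0 x :=
      (by fun_prop : Continuous (fun t => 2 * ‖deriv ψ t‖ ^ 2)).intervalIntegrable _ _
    have i2 : IntervalIntegrable (fun t => 2 * lam.re * ‖ψ t‖ ^ 2) volume 0 x :=
      (by fun_prop : Continuous (fun t => 2 * lam.re * ‖ψ t‖ ^ 2)).intervalIntegrable _ _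
    have := intervalIntegral.integral_eq_sub_of_hasDerivAt (fun t _ => dg t) (i1.sub i2) (a := 0) (b := x)
    rw [intervalIntegral.integral_sub i1 i2, intervalIntegral.integral_const_mul,
      intervalIntegral.integral_const_mul] at this
    linarith
  have hub : ∀ x, 0 ≤ x → |∫ t in (0:ℝ)..x, ‖ψ t‖ ^ 2| ≤ ∫ t, ‖ψ t‖ ^ 2 := by
    intro x hx
    rw [intervalIntegral.integral_of_le hx, abs_of_nonneg (integral_nonneg fun t => by positivity)]
    exact setIntegral_le_integral hint (Filter.Eventually.of_forall fun t => by positivity)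
  set U := ∫ t, ‖ψ t‖ ^ 2 with hU
  have key : ∃ B, ∀ x, 0 ≤ x → (∫ t in (0:ℝ)..x, ‖deriv ψ t‖ ^ 2) ≤ B := by
    by_contra hcon
    push Not at hcon
    obtain ⟨X, hX0, hX⟩ := hcon (1 + |2 * inner ℝ (ψ 0) (deriv ψ 0)| + 2 * |lam.re| * U)
    have hU0 : 0 ≤ U := integral_nonneg fun t => by positivity
    have hge : ∀ x, X ≤ x → 1 ≤ 2 * inner ℝ (ψ x) (deriv ψ x) := by
      intro x hx
      have hm : (∫ t in (0:ℝ)..X, ‖deriv ψ t‖ ^ 2) ≤ ∫ t in (0:ℝ)..x, ‖deriv ψ t‖ ^ 2 := by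
        apply intervalIntegral.integral_mono_interval le_rfl hX0 hx
        · exact Filter.Eventually.of_forall fun t => by positivity
        · exact (by fun_prop : Continuous (fun t => ‖deriv ψ t‖ ^ 2)).intervalIntegrable _ _
      have h1 := hub x (hX0.trans hx)
      have h2 : lam.re * (∫ t in (0:ℝ)..x, ‖ψ t‖ ^ 2) ≤ |lam.re| * U := by
        refine (le_abs_self _).trans ?_
        rw [abs_mul]
        gcongr
      have h3 := neg_abs_le (2 * inner ℝ (ψ 0) (deriv ψ 0))
      have h4 : 0 ≤ |2 * inner ℝ (ψ 0) (deriv ψ 0)| := abs_nonneg _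
      have h5 : 0 ≤ |lam.re| * U := by positivity
      rw [hg x]
      linarith
    have hlin : ∀ x, X ≤ x → x - X ≤ ‖ψ x‖ ^ 2 := by
      intro x hx
      have := (convex_Ici X).mul_sub_le_image_sub_of_le_deriv (f := fun x => ‖ψ x‖ ^ 2) (C := 1)
        (by fun_prop) (fun t _ => (du t).differentiableAt.differentiableWithinAt)
        (fun t ht => by
          rw [(du t).deriv]; exact hge t (interior_subset ht)) X Set.self_mem_Ici x hx hx
      have h0 : 0 ≤ ‖ψ X‖ ^ 2 := by positivity
      linarith
    have hone : IntegrableOn (fun _ : ℝ => (1:ℝ)) (Set.Ici (X + 1)) := by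
      refine Integrable.mono' hint.integrableOn aestronglyMeasurable_const ?_
      refine (ae_restrict_iff' measurableSet_Ici).2 (Filter.Eventually.of_forall fun x hx => ?_)
      have hx' : X + 1 ≤ x := hx
      have := hlin x (by linarith)
      simp only [norm_one]
      linarith
    rw [integrableOn_const_iff] at hone
    simp at hone
  obtain ⟨B, hB⟩ := key
  refine integrableOn_Ioi_of_intervalIntegral_norm_bounded B 0 (l := Filter.atTop) (b := id)
    (fun i => ((by fun_prop : Continuous (fun t => ‖deriv ψ t‖ ^ 2)).integrableOn_Ioc)) Filter.tendsto_id ?_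
  filter_upwards [Filter.eventually_ge_atTop 0] with x hx
  simpa using hB x hx

lemma gs_wronskian (lam : ℂ) (ψ₁ ψ₂ : ℝ → ℂ)
    (h₁smooth : ContDiff ℝ 2 ψ₁) (h₂smooth : ContDiff ℝ 2 ψ₂)
    (h₁int : Integrable (fun x : ℝ => ‖ψ₁ x‖ ^ 2))
    (h₂int : Integrable (fun x : ℝ => ‖ψ₂ x‖ ^ 2))
    (h₁eq : ∀ x : ℝ, -(deriv (deriv ψ₁) x) + Complex.I * (x : ℂ) ^ 3 * ψ₁ x = lam * ψ₁ x)
    (h₂eq : ∀ x : ℝ, -(deriv (deriv ψ₂) x) + Complex.I * (x : ℂ) ^ 3 * ψ₂ x = lam * ψ₂ x) :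
    ψ₁ 0 * deriv ψ₂ 0 - ψ₂ 0 * deriv ψ₁ 0 = 0 := by
  obtain ⟨d1, d1'⟩ := gs_deriv h₁smooth
  obtain ⟨d2, d2'⟩ := gs_deriv h₂smooth
  have i1 := gs_deriv_L2 lam ψ₁ h₁smooth h₁int h₁eq
  have i2 := gs_deriv_L2 lam ψ₂ h₂smooth h₂int h₂eq
  have dW : ∀ x, HasDerivAt (fun x => ψ₁ x * deriv ψ₂ x - ψ₂ x * deriv ψ₁ x) 0 x := by
    intro x
    refine (((d1 x).mul (d2' x)).sub ((d2 x).mul (d1' x))).congr_deriv ?_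
    linear_combination ψ₂ x * h₁eq x - ψ₁ x * h₂eq x
  have hc : ∀ x, ψ₁ x * deriv ψ₂ x - ψ₂ x * deriv ψ₁ x = ψ₁ 0 * deriv ψ₂ 0 - ψ₂ 0 * deriv ψ₁ 0 :=
    fun x => is_const_of_deriv_eq_zero (fun y => (dW y).differentiableAt)
      (fun y => (dW y).deriv) x 0
  set W := ψ₁ 0 * deriv ψ₂ 0 - ψ₂ 0 * deriv ψ₁ 0
  have hW : IntegrableOn (fun _ : ℝ => W) (Set.Ioi 0) := by
    refine Integrable.mono' (((h₁int.integrableOn.add i2).add (h₂int.integrableOn.add i1)))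
      aestronglyMeasurable_const (Filter.Eventually.of_forall fun x => ?_)
    simp only [Pi.add_apply]
    rw [← hc x]
    refine (norm_sub_le _ _).trans ?_
    rw [norm_mul, norm_mul]
    nlinarith [sq_nonneg (‖ψ₁ x‖ - ‖deriv ψ₂ x‖), sq_nonneg (‖ψ₂ x‖ - ‖deriv ψ₁ x‖),
      sq_nonneg (‖ψ₁ x‖ + ‖deriv ψ₂ x‖), sq_nonneg (‖ψ₂ x‖ + ‖deriv ψ₁ x‖)]
  rw [integrableOn_const_iff] at hW
  simpa using hW

lemma gs_unique (q : ℝ → ℂ) (hq : Continuous q) (φ φ' : ℝ → ℂ)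
    (h : ∀ x, HasDerivAt φ (φ' x) x) (h' : ∀ x, HasDerivAt φ' (q x * φ x) x)
    (h0 : φ 0 = 0) (h0' : φ' 0 = 0) : ∀ x, φ x = 0 := by
  intro x
  obtain ⟨M, hM⟩ := (isCompact_Icc (a := -(|x|+1)) (b := |x|+1)).exists_bound_of_continuousOn
    hq.continuousOn
  have hx : |x| < |x| + 1 := by linarith
  have hM0 : 0 ≤ M := (norm_nonneg _).trans (hM 0 ⟨by linarith [abs_nonneg x], by linarith [abs_nonneg x]⟩)
  have := ODE_solution_unique_of_mem_Ioo (E := ℂ × ℂ) (v := fun t y => (y.2, q t * y.1))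
    (s := fun _ => Set.univ) (K := (⟨M, hM0⟩ ⊔ 1 : NNReal)) (a := -(|x|+1)) (b := |x|+1) (t₀ := 0)
    (f := fun t => (φ t, φ' t)) (g := fun _ => 0)
    (fun t ht => by
      refine LipschitzOnWith.of_dist_le_mul fun y _ z _ => ?_
      have hqt := hM t ⟨ht.1.le, ht.2.le⟩
      have e1 : dist y.1 z.1 ≤ dist y z := le_max_left _ _
      have e2 : dist y.2 z.2 ≤ dist y z := le_max_right _ _
      have k1 : (M:ℝ) ≤ ((⟨M, hM0⟩ ⊔ 1 : NNReal) : ℝ) := by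
        exact_mod_cast (le_max_left (⟨M, hM0⟩ : NNReal) 1)
      have k2 : (1:ℝ) ≤ ((⟨M, hM0⟩ ⊔ 1 : NNReal) : ℝ) := by
        exact_mod_cast (le_max_right (⟨M, hM0⟩ : NNReal) 1)
      rw [Prod.dist_eq (x := (y.2, q t * y.1))]
      refine max_le ?_ ?_
      · calc dist y.2 z.2 ≤ 1 * dist y z := by linarith
          _ ≤ _ := by gcongr
      · calc dist (q t * y.1) (q t * z.1) = ‖q t‖ * dist y.1 z.1 := by
              rw [dist_eq_norm, dist_eq_norm, ← mul_sub, norm_mul]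
          _ ≤ M * dist y z := by gcongr
          _ ≤ _ := by gcongr)
    ⟨by linarith [abs_nonneg x], by linarith [abs_nonneg x]⟩
    (fun t _ => ⟨(h t).prodMk (h' t), trivial⟩)
    (fun t _ => ⟨(hasDerivAt_const t (0 : ℂ × ℂ)).congr_deriv (by simp; rfl), trivial⟩)
    (by simp [h0, h0'])
  have hh := this (x := x) (abs_lt.1 hx)
  exact congrArg Prod.fst hh

/-- Geometric simplicity: any two square-integrable classical solutions of
`-ψ'' + i x³ ψ = lam ψ` are linearly dependent. -/
theorem geometric_simplicity (lam : ℂ) (ψ₁ ψ₂ : ℝ → ℂ)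
    (h₁smooth : ContDiff ℝ 2 ψ₁) (h₂smooth : ContDiff ℝ 2 ψ₂)
    (h₁int : Integrable (fun x : ℝ => ‖ψ₁ x‖ ^ 2))
    (h₂int : Integrable (fun x : ℝ => ‖ψ₂ x‖ ^ 2))
    (h₁eq : ∀ x : ℝ, -(deriv (deriv ψ₁) x) + Complex.I * (x : ℂ) ^ 3 * ψ₁ x = lam * ψ₁ x)
    (h₂eq : ∀ x : ℝ, -(deriv (deriv ψ₂) x) + Complex.I * (x : ℂ) ^ 3 * ψ₂ x = lam * ψ₂ x) :
    ∃ a b : ℂ, (a, b) ≠ (0, 0) ∧ ∀ x : ℝ, a * ψ₁ x + b * ψ₂ x = 0 := by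
  have hW := gs_wronskian lam ψ₁ ψ₂ h₁smooth h₂smooth h₁int h₂int h₁eq h₂eq
  obtain ⟨d1, d1'⟩ := gs_deriv h₁smooth
  obtain ⟨d2, d2'⟩ := gs_deriv h₂smooth
  have main : ∀ a b : ℂ, a * ψ₁ 0 + b * ψ₂ 0 = 0 → a * deriv ψ₁ 0 + b * deriv ψ₂ 0 = 0 →
      ∀ x, a * ψ₁ x + b * ψ₂ x = 0 := by
    intro a b h0 h0'
    refine gs_unique (fun x => Complex.I * (x : ℂ) ^ 3 - lam) (by fun_prop) _
      (fun x => a * deriv ψ₁ x + b * deriv ψ₂ x)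
      (fun x => ((d1 x).const_mul a).add ((d2 x).const_mul b)) (fun x => ?_) h0 h0'
    refine (((d1' x).const_mul a).add ((d2' x).const_mul b)).congr_deriv ?_
    linear_combination -a * h₁eq x - b * h₂eq x
  by_cases hv : ψ₁ 0 = 0 ∧ ψ₂ 0 = 0
  · by_cases hd : deriv ψ₁ 0 = 0
    · exact ⟨1, 0, by simp, main 1 0 (by simp [hv.1]) (by simp [hd])⟩
    · exact ⟨deriv ψ₂ 0, -deriv ψ₁ 0, by simp [hd], main _ _ (by simp [hv.1, hv.2]) (by ring)⟩
  · refine ⟨ψ₂ 0, -ψ₁ 0, ?_, main _ _ (by ring) (by linear_combination -hW)⟩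
    intro h
    simp only [Prod.mk.injEq, neg_eq_zero] at h
    exact hv ⟨h.2, h.1⟩
end
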